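/- Let μ be a non-degenerate aperiodic probability measure on Γ with finite second moment, and let ζ := (1/#F)·∑_{x∈Δ}∑_{s∈Γ} μ(s)·α(x,s) ∈ ℝ^m be the drift. Then there exists a symmetric positive-definite m×m real matrix Σ such that: (a) for all v₁, v₂ ∈ ℝ^m and all harmonic decompositions v̂₁ = u₁ + df₁ and v̂₂ = u₂ + df₂, one has ⟨v₁, Σ v₂⟩ = ∑_{x∈Δ}∑_{s∈Γ} c(x,s)·u₁(x,s)·u₂(x,s) − χ(u₁)·χ(u₂); and (b) lim_{n→∞} sup_{γ∈Γ} n^{m/2}·|μ_n(γ) − (1/#F)·ξ_{nΣ}(Φ(γ) − n·ζ)| = 0. -/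

import Mathlib

open scoped BigOperators Classical
open Filter Matrix MeasureTheory

namespace NSVA

noncomputable section

/-- Convolution of two real-valued functions on a group. -/
def conv {G : Type*} [Group G] (μ ν : G → ℝ) : G → ℝ :=
  fun g => ∑' h : G, μ h * ν (h⁻¹ * g)

/-- Convolution powers: `convPow μ 0 = δ_1`, `convPow μ (n+1) = (convPow μ n) * μ`. -/
def convPow {G : Type*} [Group G] (μ : G → ℝ) : ℕ → G → ℝ
  | 0 => fun g => if g = 1 then 1 else 0
  | n + 1 => conv (convPow μ n) μ

/-- A probability measure on a countable set, viewed as a function. -/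
def IsProb {G : Type*} (μ : G → ℝ) : Prop := (∀ g, 0 ≤ μ g) ∧ HasSum μ 1

/-- The support of `μ` generates the group as a semigroup. -/
def Nondeg {G : Type*} [Group G] (μ : G → ℝ) : Prop :=
  ∀ g : G, g ∈ Subsemigroup.closure {x : G | 0 < μ x}

/-- `μ` is aperiodic: `μ_n(1) > 0` for all large enough `n`. -/
def Aperiodic {G : Type*} [Group G] (μ : G → ℝ) : Prop :=
  ∃ N : ℕ, ∀ n : ℕ, N ≤ n → 0 < convPow μ n 1

/-- Total variation distance between two (probability) functions. -/
def tv {Z : Type*} (p q : Z → ℝ) : ℝ := (1 / 2) * ∑' z : Z, |p z - q z|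

/-- Word length with respect to a finite set `S₀`. -/
def wordLength {G : Type*} [Group G] (S₀ : Finset G) (g : G) : ℕ :=
  sInf {n : ℕ | ∃ l : List G, (∀ s ∈ l, s ∈ S₀) ∧ l.length = n ∧ l.prod = g}

/-- Finite second moment with respect to a word metric given by a finite symmetric
generating set. -/
def FinSecondMoment {G : Type*} [Group G] (μ : G → ℝ) : Prop :=
  ∃ S₀ : Finset G, (∀ s ∈ S₀, s⁻¹ ∈ S₀) ∧ Subgroup.closure (S₀ : Set G) = ⊤ ∧
    Summable (fun g : G => (wordLength S₀ g : ℝ) ^ 2 * μ g)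

/-- A group is virtually abelian if it has an abelian subgroup of finite index. -/
def VirtAbelian (G : Type*) [Group G] : Prop :=
  ∃ A : Subgroup G, A.index ≠ 0 ∧ ∀ a b : A, a * b = b * a

/-- The noised measure `π^ρ` on `G × G`. -/
def noised {G : Type*} (μ : G → ℝ) (ρ : ℝ) : G × G → ℝ :=
  fun p => ρ * μ p.1 * μ p.2 + (1 - ρ) * μ p.1 * (if p.1 = p.2 then 1 else 0)

/-- First marginal of a measure on a product. -/
def marg1 {G₁ G₂ : Type*} (ν : G₁ × G₂ → ℝ) : G₁ → ℝ := fun γ₁ => ∑' γ₂ : G₂, ν (γ₁, γ₂)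

/-- Second marginal of a measure on a product. -/
def marg2 {G₁ G₂ : Type*} (ν : G₁ × G₂ → ℝ) : G₂ → ℝ := fun γ₂ => ∑' γ₁ : G₁, ν (γ₁, γ₂)

/-- A system of representatives of the right cosets `Λ\Γ` containing the identity,
together with the representative map `rep`, constant on right cosets. -/
structure RepSystem {Γ : Type*} [Group Γ] (Λ : Subgroup Γ) where
  Δ : Finset Γ
  one_mem : (1 : Γ) ∈ Δ
  rep : Γ → Γ
  rep_mem : ∀ γ : Γ, rep γ ∈ Δ
  rep_spec : ∀ γ : Γ, γ * (rep γ)⁻¹ ∈ Λ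
  rep_idem : ∀ x ∈ Δ, rep x = x
  rep_coset : ∀ γ : Γ, ∀ v ∈ Λ, rep (v * γ) = rep γ

variable {Γ : Type*} [Group Γ] {Λ : Subgroup Γ} {m : ℕ}

/-- The cocycle `α(x,s) = ψ(x·s·(x^s)⁻¹) ∈ ℤ^m`. -/
def cocycle (ψ : Λ ≃* Multiplicative (Fin m → ℤ)) (R : RepSystem Λ) (x s : Γ) : Fin m → ℤ :=
  Multiplicative.toAdd (ψ ⟨x * s * (R.rep (x * s))⁻¹, R.rep_spec (x * s)⟩)

/-- The transfer homomorphism `θ(γ) = ∑_{x∈Δ} α(x,γ)`. -/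
def transfer (ψ : Λ ≃* Multiplicative (Fin m → ℤ)) (R : RepSystem Λ) (γ : Γ) : Fin m → ℤ :=
  ∑ x ∈ R.Δ, cocycle ψ R x γ

/-- `Φ(γ) = ψ(v)` where `γ = v·x`, `v ∈ Λ`, `x ∈ Δ`. -/
def Phi (ψ : Λ ≃* Multiplicative (Fin m → ℤ)) (R : RepSystem Λ) (γ : Γ) : Fin m → ℤ :=
  Multiplicative.toAdd (ψ ⟨γ * (R.rep γ)⁻¹, R.rep_spec γ⟩)

/-- A 1-form on the quotient diagram. -/
def IsOneForm (R : RepSystem Λ) (ω : Γ → Γ → ℝ) : Prop :=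
  ∀ x ∈ R.Δ, ∀ s : Γ, ω (R.rep (x * s)) s⁻¹ = -ω x s

/-- `χ(ω) = ∑_{x∈Δ} ∑_s c(x,s)·ω(x,s)` where `c(x,s) = μ(s)/#F`. -/
def chi (R : RepSystem Λ) (μ : Γ → ℝ) (ω : Γ → Γ → ℝ) : ℝ :=
  ∑ x ∈ R.Δ, ∑' s : Γ, μ s / (Λ.index : ℝ) * ω x s

/-- Square-integrability of a 1-form. -/
def SqInt (R : RepSystem Λ) (μ : Γ → ℝ) (ω : Γ → Γ → ℝ) : Prop :=
  ∀ x ∈ R.Δ, Summable (fun s : Γ => μ s / (Λ.index : ℝ) * ω x s ^ 2)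

/-- Harmonicity of a (square-integrable) 1-form. -/
def Harmonic (R : RepSystem Λ) (μ : Γ → ℝ) (ω : Γ → Γ → ℝ) : Prop :=
  SqInt R μ ω ∧ ∀ x ∈ R.Δ, (∑' s : Γ, μ s * ω x s) = chi R μ ω

/-- The differential `df(x,s) = f(x^s) − f(x)`. -/
def dd (R : RepSystem Λ) (f : Γ → ℝ) : Γ → Γ → ℝ := fun x s => f (R.rep (x * s)) - f x

/-- `(u, f)` is a harmonic decomposition of the 1-form `ω`: `ω = u + df` with `u`
a harmonic 1-form. -/
def IsHarmDecomp (R : RepSystem Λ) (μ : Γ → ℝ) (ω u : Γ → Γ → ℝ) (f : Γ → ℝ) : Prop :=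
  IsOneForm R u ∧ Harmonic R μ u ∧ ∀ x ∈ R.Δ, ∀ s : Γ, ω x s = u x s + dd R f x s

/-- The 1-form `v̂(x,s) = ⟨v, α(x,s)⟩` (standard inner product). -/
def vhat (ψ : Λ ≃* Multiplicative (Fin m → ℤ)) (R : RepSystem Λ) (v : Fin m → ℝ) :
    Γ → Γ → ℝ :=
  fun x s => ∑ i, v i * (cocycle ψ R x s i : ℝ)

/-- The 1-form `v̂(x,s) = B(v, α(x,s))` for a bilinear form `B`. -/
def vhatB (ψ : Λ ≃* Multiplicative (Fin m → ℤ)) (R : RepSystem Λ)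
    (B : (Fin m → ℝ) →ₗ[ℝ] (Fin m → ℝ) →ₗ[ℝ] ℝ) (v : Fin m → ℝ) : Γ → Γ → ℝ :=
  fun x s => B v (fun i => (cocycle ψ R x s i : ℝ))

/-- The drift `ζ = (1/#F)·∑_{x∈Δ}∑_s μ(s)·α(x,s) ∈ ℝ^m`. -/
def drift (ψ : Λ ≃* Multiplicative (Fin m → ℤ)) (R : RepSystem Λ) (μ : Γ → ℝ) : Fin m → ℝ :=
  fun i => (Λ.index : ℝ)⁻¹ * ∑ x ∈ R.Δ, ∑' s : Γ, μ s * (cocycle ψ R x s i : ℝ)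

/-- The covariance pairing `∑_{x,s} c(x,s)·u(x,s)·u'(x,s) − χ(u)·χ(u')`. -/
def cov (R : RepSystem Λ) (μ : Γ → ℝ) (u u' : Γ → Γ → ℝ) : ℝ :=
  (∑ x ∈ R.Δ, ∑' s : Γ, μ s / (Λ.index : ℝ) * (u x s * u' x s)) - chi R μ u * chi R μ u'

/-- The transfer operator `ℒ_v` acting on functions `Δ → ℂ`. -/
def transferOp (ψ : Λ ≃* Multiplicative (Fin m → ℤ)) (R : RepSystem Λ) (μ : Γ → ℝ)
    (v : Fin m → ℝ) (f : Γ → ℂ) : Γ → ℂ :=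
  fun x => ∑' s : Γ, (μ s : ℂ) *
    Complex.exp (2 * Real.pi * Complex.I * ((∑ i, v i * (cocycle ψ R x s i : ℝ)) : ℝ)) *
    f (R.rep (x * s))

/-- The Gaussian density `ξ_A(w)` associated with a (positive-definite) matrix `A`. -/
def gauss {d : ℕ} (A : Matrix (Fin d) (Fin d) ℝ) (w : Fin d → ℝ) : ℝ :=
  (2 * Real.pi) ^ (-(d : ℝ) / 2) * A.det ^ (-(1 : ℝ) / 2) *
    Real.exp (-(w ⬝ᵥ A⁻¹.mulVec w) / 2)

/-- The product representative system for `Λ₁ × Λ₂ ≤ Γ₁ × Γ₂`. -/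
def prodRep {Γ₁ : Type*} [Group Γ₁] {Γ₂ : Type*} [Group Γ₂]
    {Λ₁ : Subgroup Γ₁} {Λ₂ : Subgroup Γ₂}
    (R₁ : RepSystem Λ₁) (R₂ : RepSystem Λ₂) : RepSystem (Λ₁.prod Λ₂) where
  Δ := R₁.Δ ×ˢ R₂.Δ
  one_mem := Finset.mem_product.mpr ⟨R₁.one_mem, R₂.one_mem⟩
  rep := fun p => (R₁.rep p.1, R₂.rep p.2)
  rep_mem := fun p => Finset.mem_product.mpr ⟨R₁.rep_mem p.1, R₂.rep_mem p.2⟩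
  rep_spec := fun p => Subgroup.mem_prod.mpr ⟨R₁.rep_spec p.1, R₂.rep_spec p.2⟩
  rep_idem := fun x hx => by
    rcases Finset.mem_product.mp hx with ⟨h1, h2⟩
    exact Prod.ext_iff.mpr ⟨R₁.rep_idem x.1 h1, R₂.rep_idem x.2 h2⟩
  rep_coset := fun p v hv => by
    rcases Subgroup.mem_prod.mp hv with ⟨h1, h2⟩
    exact Prod.ext_iff.mpr ⟨R₁.rep_coset p.1 v.1 h1, R₂.rep_coset p.2 v.2 h2⟩

/-- The 1-form `𝐯̂(x,s) = ⟨𝐯, α(x,s)⟩` on a product, standard inner product. -/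
def vhat2 {Γ₁ : Type*} [Group Γ₁] {Γ₂ : Type*} [Group Γ₂]
    {Λ₁ : Subgroup Γ₁} {Λ₂ : Subgroup Γ₂} {m₁ m₂ : ℕ}
    (ψ₁ : Λ₁ ≃* Multiplicative (Fin m₁ → ℤ)) (R₁ : RepSystem Λ₁)
    (ψ₂ : Λ₂ ≃* Multiplicative (Fin m₂ → ℤ)) (R₂ : RepSystem Λ₂)
    (v : (Fin m₁ → ℝ) × (Fin m₂ → ℝ)) : (Γ₁ × Γ₂) → (Γ₁ × Γ₂) → ℝ :=
  fun x s => (∑ i, v.1 i * (cocycle ψ₁ R₁ x.1 s.1 i : ℝ)) +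
    ∑ i, v.2 i * (cocycle ψ₂ R₂ x.2 s.2 i : ℝ)

/-- The 1-form `𝐯̂(x,s) = ⟨𝐯, α(x,s)⟩` on a product, orthogonal-sum of the two
bilinear forms `B₁`, `B₂`. -/
def vhatB2 {Γ₁ : Type*} [Group Γ₁] {Γ₂ : Type*} [Group Γ₂]
    {Λ₁ : Subgroup Γ₁} {Λ₂ : Subgroup Γ₂} {m₁ m₂ : ℕ}
    (ψ₁ : Λ₁ ≃* Multiplicative (Fin m₁ → ℤ)) (R₁ : RepSystem Λ₁)
    (B₁ : (Fin m₁ → ℝ) →ₗ[ℝ] (Fin m₁ → ℝ) →ₗ[ℝ] ℝ)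
    (ψ₂ : Λ₂ ≃* Multiplicative (Fin m₂ → ℤ)) (R₂ : RepSystem Λ₂)
    (B₂ : (Fin m₂ → ℝ) →ₗ[ℝ] (Fin m₂ → ℝ) →ₗ[ℝ] ℝ)
    (v : (Fin m₁ → ℝ) × (Fin m₂ → ℝ)) : (Γ₁ × Γ₂) → (Γ₁ × Γ₂) → ℝ :=
  fun x s => B₁ v.1 (fun i => (cocycle ψ₁ R₁ x.1 s.1 i : ℝ)) +
    B₂ v.2 (fun i => (cocycle ψ₂ R₂ x.2 s.2 i : ℝ))

end

section MarkovPerturbation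

open scoped Topology

attribute [local instance] Matrix.linftyOpNormedRing Matrix.linftyOpNormedAlgebra

variable {ι : Type*} [Fintype ι]

lemma sum_mulVec_of_vecMul_one {P : Matrix ι ι ℝ} (hcol : 1 ᵥ* P = 1) (h : ι → ℝ) :
    ∑ x, (P *ᵥ h) x = ∑ x, h x := by
  have : (1 : ι → ℝ) ⬝ᵥ (P *ᵥ h) = 1 ⬝ᵥ h := by rw [dotProduct_mulVec, hcol]
  simpa [dotProduct] using this

/-- Doeblin's contraction estimate on mean-zero vectors. -/
lemma norm_mulVec_le_of_doeblin {Q : Matrix ι ι ℝ} {c : ℝ} (hrow : Q *ᵥ 1 = 1)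
    (hc : ∀ x y, c ≤ Q x y) {h : ι → ℝ} (hsum : ∑ x, h x = 0) :
    ‖Q *ᵥ h‖ ≤ (1 - Fintype.card ι * c) * ‖h‖ := by
  rcases isEmpty_or_nonempty ι with hι | hι
  · simp [Subsingleton.elim h 0]
  refine (pi_norm_le_iff_of_nonempty _).2 fun x => ?_
  have hx : ∑ y, Q x y = 1 := by simpa [mulVec, dotProduct] using congrFun hrow x
  have h1 : (Q *ᵥ h) x = ∑ y, (Q x y - c) * h y := by
    simp [mulVec, dotProduct, sub_mul, Finset.sum_sub_distrib, ← Finset.mul_sum, hsum]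
  rw [h1]
  calc ‖∑ y, (Q x y - c) * h y‖ ≤ ∑ y, (Q x y - c) * ‖h‖ := by
        refine (norm_sum_le _ _).trans (Finset.sum_le_sum fun y _ => ?_)
        rw [norm_mul, Real.norm_of_nonneg (sub_nonneg.2 (hc x y))]
        exact mul_le_mul_of_nonneg_left (norm_le_pi_norm h y) (sub_nonneg.2 (hc x y))
    _ = _ := by simp [← Finset.sum_mul, Finset.sum_sub_distrib, hx]

variable [DecidableEq ι]

lemma pow_mulVec_one {P : Matrix ι ι ℝ} (hrow : P *ᵥ 1 = 1) (N : ℕ) : (P ^ N) *ᵥ 1 = 1 := by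
  induction N with
  | zero => simp
  | succ n ih => rw [pow_succ, ← mulVec_mulVec, hrow, ih]

lemma pow_one_vecMul {P : Matrix ι ι ℝ} (hcol : 1 ᵥ* P = 1) (N : ℕ) : 1 ᵥ* (P ^ N) = 1 := by
  induction N with
  | zero => simp
  | succ n ih => rw [pow_succ, ← vecMul_vecMul, ih, hcol]

/-- A mean-zero vector fixed by a bistochastic matrix with a positive power vanishes. -/
lemma eq_zero_of_mulVec_eq {P : Matrix ι ι ℝ} {N : ℕ} {c : ℝ} (hrow : P *ᵥ 1 = 1) (hc0 : 0 < c)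
    (hc : ∀ x y, c ≤ (P ^ N) x y) {h : ι → ℝ} (hsum : ∑ x, h x = 0) (hfix : P *ᵥ h = h) :
    h = 0 := by
  rcases isEmpty_or_nonempty ι with hι | hι
  · exact Subsingleton.elim _ _
  have hfix' : ∀ n : ℕ, (P ^ n) *ᵥ h = h := by
    intro n
    induction n with
    | zero => simp
    | succ n ih => rw [pow_succ, ← mulVec_mulVec, hfix, ih]
  have h1 := norm_mulVec_le_of_doeblin (pow_mulVec_one hrow N) hc hsum
  rw [hfix'] at h1
  have h2 : 0 < (Fintype.card ι : ℝ) * c := by positivity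
  have : ‖h‖ ≤ 0 := by nlinarith [norm_nonneg h]
  exact norm_le_zero_iff.1 this

/-- The Poisson equation for a bistochastic matrix with a positive power. -/
lemma exists_poisson {P : Matrix ι ι ℝ} {N : ℕ} {c : ℝ} (hrow : P *ᵥ 1 = 1) (hcol : 1 ᵥ* P = 1)
    (hc0 : 0 < c) (hc : ∀ x y, c ≤ (P ^ N) x y) {h : ι → ℝ} (hsum : ∑ x, h x = 0) :
    ∃ g : ι → ℝ, g - P *ᵥ g = h := by
  rcases isEmpty_or_nonempty ι with hι | hι
  · exact ⟨h, Subsingleton.elim _ _⟩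
  let T : (ι → ℝ) →ₗ[ℝ] (ι → ℝ) :=
    { toFun := fun g => g - P *ᵥ g + fun _ => ∑ x, g x
      map_add' := fun a b => by
        ext x; simp [mulVec_add, Finset.sum_add_distrib]; ring
      map_smul' := fun r a => by
        ext x; simp [mulVec_smul, ← Finset.mul_sum]; ring }
  have hTsum : ∀ g, ∑ x, T g x = Fintype.card ι * ∑ x, g x := fun g => by
    simp [T, Finset.sum_add_distrib, Finset.sum_sub_distrib, sum_mulVec_of_vecMul_one hcol]
  have hcard : (Fintype.card ι : ℝ) ≠ 0 := by simp
  have hinj : Function.Injective T := by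
    rw [← LinearMap.ker_eq_bot, LinearMap.ker_eq_bot']
    intro g hg
    have hs : ∑ x, g x = 0 := by
      have := hTsum g
      rw [hg] at this
      simpa [hcard] using this.symm
    refine eq_zero_of_mulVec_eq hrow hc0 hc hs ?_
    ext x
    have := congrFun hg x
    simp [T, hs] at this
    linarith
  obtain ⟨g, hg⟩ := LinearMap.surjective_of_injective hinj h
  have hs : ∑ x, g x = 0 := by
    have := hTsum g
    rw [hg, hsum] at this
    simpa [hcard] using this.symm
  refine ⟨g, ?_⟩
  rw [← hg]
  ext x
  simp [T, hs]

lemma pow_mulVec_tendsto_zero {P : Matrix ι ι ℝ} {N : ℕ} {c : ℝ} (hrow : P *ᵥ 1 = 1)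
    (hcol : 1 ᵥ* P = 1) (hc0 : 0 < c) (hc : ∀ x y, c ≤ (P ^ N) x y) {h : ι → ℝ}
    (hsum : ∑ x, h x = 0) {ε : ℝ} (hε : 0 < ε) : ∃ k : ℕ, ‖(P ^ k) *ᵥ h‖ < ε := by
  rcases isEmpty_or_nonempty ι with hι | ⟨⟨x₀⟩⟩
  · exact ⟨0, by simpa [Subsingleton.elim h 0] using hε⟩
  have : Nonempty ι := ⟨x₀⟩
  set θ : ℝ := 1 - Fintype.card ι * c with hθ
  have h2 : 0 < (Fintype.card ι : ℝ) * c := by positivity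
  have hθ0 : 0 ≤ θ := by
    have hx : ∑ y, (P ^ N) x₀ y = 1 := by
      simpa [mulVec, dotProduct] using congrFun (pow_mulVec_one hrow N) x₀
    have : ∑ _y : ι, c ≤ 1 := hx ▸ Finset.sum_le_sum fun y _ => hc x₀ y
    simp at this
    linarith
  have key : ∀ j : ℕ, ‖(P ^ N) ^ j *ᵥ h‖ ≤ θ ^ j * ‖h‖ := by
    intro j
    induction j with
    | zero => simp
    | succ j ih =>
      rw [pow_succ', ← mulVec_mulVec]
      refine (norm_mulVec_le_of_doeblin (pow_mulVec_one hrow N) hc ?_).trans ?_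
      · rw [← pow_mul, sum_mulVec_of_vecMul_one (pow_one_vecMul hcol _), hsum]
      · rw [pow_succ', mul_assoc]
        exact mul_le_mul_of_nonneg_left ih hθ0
  have hlim : Tendsto (fun j : ℕ => θ ^ j * ‖h‖) atTop (𝓝 (0 * ‖h‖)) :=
    (tendsto_pow_atTop_nhds_zero_of_lt_one hθ0 (by linarith)).mul_const _
  rw [zero_mul] at hlim
  obtain ⟨j, hj⟩ := (hlim.eventually (gt_mem_nhds hε)).exists
  exact ⟨N * j, by rw [pow_mul]; exact (key j).trans_lt hj⟩

lemma norm_pow_le_one_of_norm_le_one [Nonempty ι] {M : Matrix ι ι ℂ} (hM : ‖M‖ ≤ 1) (k : ℕ) :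
    ‖M ^ k‖ ≤ 1 := by
  rcases Nat.eq_zero_or_pos k with rfl | hk
  · rw [pow_zero, linfty_opNorm_def]
    norm_cast
    refine Finset.sup_le fun x _ => ?_
    rw [Finset.sum_eq_single x] <;> simp +contextual [eq_comm]
  · exact (norm_pow_le' M hk).trans (pow_le_one₀ (norm_nonneg _) hM)

/-- An approximate eigenvector of a contraction is nearly preserved by its powers. -/
lemma norm_pow_mulVec_sub_le [Nonempty ι] {M : Matrix ι ι ℂ} (hM : ‖M‖ ≤ 1) {l : ℂ} (hl : ‖l‖ ≤ 1)
    (w : ι → ℂ) (k : ℕ) : ‖M ^ k *ᵥ w - l ^ k • w‖ ≤ k * ‖M *ᵥ w - l • w‖ := by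
  induction k with
  | zero => simp
  | succ k ih =>
    have : M ^ (k + 1) *ᵥ w - l ^ (k + 1) • w
        = M ^ k *ᵥ (M *ᵥ w - l • w) + l • (M ^ k *ᵥ w - l ^ k • w) := by
      rw [mulVec_sub, mulVec_mulVec, ← pow_succ, mulVec_smul, smul_sub, smul_smul, ← pow_succ']
      abel
    rw [this]
    refine (norm_add_le _ _).trans ?_
    have h1 : ‖M ^ k *ᵥ (M *ᵥ w - l • w)‖ ≤ ‖M *ᵥ w - l • w‖ := by
      refine (linfty_opNorm_mulVec _ _).trans ?_
      exact mul_le_of_le_one_left (norm_nonneg _) (norm_pow_le_one_of_norm_le_one hM k)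
    have h2 : ‖l • (M ^ k *ᵥ w - l ^ k • w)‖ ≤ k * ‖M *ᵥ w - l • w‖ := by
      rw [norm_smul]
      exact (mul_le_of_le_one_left (norm_nonneg _) hl).trans ih
    push_cast
    linarith

/-- Central limit behaviour of powers of contractions converging to a bistochastic matrix. -/
lemma tendsto_pow_of_perturbation [Nonempty ι] {P : Matrix ι ι ℝ} {N : ℕ} {c : ℝ}
    (hrow : P *ᵥ 1 = 1) (hcol : 1 ᵥ* P = 1) (hc0 : 0 < c) (hc : ∀ x y, c ≤ (P ^ N) x y)
    {M : ℕ → Matrix ι ι ℂ} (hM : ∀ n, ‖M n‖ ≤ 1)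
    (hMP : Tendsto M atTop (𝓝 (P.map Complex.ofReal)))
    {e : ℕ → ι → ℂ} (he : Tendsto e atTop (𝓝 1)) {b : ι → ℝ} {a : ℝ} (ha : 0 ≤ a)
    (hab : a = (Fintype.card ι : ℝ)⁻¹ * ∑ x, b x)
    (hMe : Tendsto (fun n : ℕ => (n : ℂ) • (M n *ᵥ e n - e n)) atTop
      (𝓝 (-(fun x => (b x : ℂ))))) (x y : ι) :
    Tendsto (fun n : ℕ => (M n ^ n) x y) atTop
      (𝓝 (((Fintype.card ι : ℝ)⁻¹ * Real.exp (-a) : ℝ) : ℂ)) := by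
  have hcard : (Fintype.card ι : ℝ) ≠ 0 := by simp
  obtain ⟨g, hg⟩ := exists_poisson hrow hcol hc0 hc (h := fun x => a - b x) (by
    rw [Finset.sum_sub_distrib, hab]; simp [hcard])
  set gc : ι → ℂ := fun x => (g x : ℂ) with hgc
  have hcont : ∀ v : ι → ℂ, Tendsto (fun n => M n *ᵥ v) atTop
      (𝓝 (P.map Complex.ofReal *ᵥ v)) := fun v =>
    ((continuous_id.matrix_mulVec continuous_const).tendsto (P.map Complex.ofReal)).comp hMP
  have hn0 : Tendsto (fun n : ℕ => ((n : ℂ))⁻¹) atTop (𝓝 0) := tendsto_inv_atTop_nhds_zero_nat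
  set w : ℕ → ι → ℂ := fun n => e n + (n : ℂ)⁻¹ • gc with hw
  have hw1 : Tendsto w atTop (𝓝 1) := by
    simpa using he.add (hn0.smul_const gc)
  set l : ℕ → ℂ := fun n => 1 + ((-a : ℝ) : ℂ) / n with hl
  have hr : Tendsto (fun n : ℕ => (n : ℂ) • (M n *ᵥ w n - l n • w n)) atTop (𝓝 0) := by
    have h1 : Tendsto (fun n : ℕ => (n : ℂ) • (M n *ᵥ e n - e n) + M n *ᵥ gc + (a : ℂ) • e n - gc
        + ((n : ℂ)⁻¹ * a) • gc) atTop
        (𝓝 (-(fun x => (b x : ℂ)) + P.map Complex.ofReal *ᵥ gc + (a : ℂ) • 1 - gc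
          + ((0 : ℂ) * a) • gc)) :=
      (((hMe.add (hcont gc)).add (he.const_smul _)).sub_const _).add
        ((hn0.mul_const _).smul_const _)
    have h2 : -(fun x => (b x : ℂ)) + P.map Complex.ofReal *ᵥ gc + (a : ℂ) • 1 - gc
          + ((0 : ℂ) * a) • gc = 0 := by
      ext x
      have hx := congrArg Complex.ofReal (congrFun hg x)
      simp [mulVec, dotProduct] at hx ⊢
      linear_combination (-1 : ℂ) * hx
    rw [h2] at h1
    refine h1.congr' ?_
    filter_upwards [eventually_ne_atTop 0] with n hn
    have hnc : (n : ℂ) ≠ 0 := by exact_mod_cast hn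
    ext x
    simp only [hw, hl, mulVec_add, mulVec_smul, Pi.add_apply, Pi.sub_apply, Pi.smul_apply,
      smul_eq_mul]
    push_cast
    field_simp
    ring
  have hlpow : Tendsto (fun n : ℕ => l n ^ n) atTop (𝓝 (Complex.exp ((-a : ℝ) : ℂ))) :=
    Complex.tendsto_one_add_div_pow_exp _
  have hMw : Tendsto (fun n : ℕ => M n ^ n *ᵥ w n - l n ^ n • w n) atTop (𝓝 0) := by
    refine squeeze_zero_norm' ?_ (tendsto_zero_iff_norm_tendsto_zero.1 hr)
    obtain ⟨n₀, hn₀⟩ := exists_nat_gt a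
    filter_upwards [eventually_ge_atTop (max n₀ 1)] with n hn
    have hn1 : (1 : ℝ) ≤ n := by exact_mod_cast (le_max_right _ _).trans hn
    have hna : a ≤ n := hn₀.le.trans (by exact_mod_cast (le_max_left _ _).trans hn)
    have hln : ‖l n‖ ≤ 1 := by
      have h3 : l n = ((1 - a / n : ℝ) : ℂ) := by simp [hl]; ring
      have h4 : a / n ≤ 1 := div_le_one_of_le₀ hna (by linarith)
      have h5 : 0 ≤ a / n := by positivity
      rw [h3, Complex.norm_real, Real.norm_eq_abs, abs_le]
      constructor <;> linarith
    refine (norm_pow_mulVec_sub_le (hM n) hln (w n) n).trans (le_of_eq ?_)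
    rw [norm_smul]
    simp
  have hsmall : ∀ v : ℕ → ι → ℂ, Tendsto v atTop (𝓝 0) →
      Tendsto (fun n : ℕ => M n ^ n *ᵥ v n) atTop (𝓝 0) := fun v hv =>
    squeeze_zero_norm (fun n => (linfty_opNorm_mulVec _ _).trans
      (mul_le_of_le_one_left (norm_nonneg _) (norm_pow_le_one_of_norm_le_one (hM n) n)))
      (tendsto_zero_iff_norm_tendsto_zero.1 hv)
  have hone : Tendsto (fun n : ℕ => M n ^ n *ᵥ (1 : ι → ℂ)) atTop
      (𝓝 (Complex.exp ((-a : ℝ) : ℂ) • 1)) := by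
    have h1 := (hMw.add (hlpow.smul hw1)).add (hsmall (fun n => 1 - w n) (by
      simpa using hw1.const_sub 1))
    rw [zero_add, add_zero] at h1
    refine h1.congr fun n => ?_
    rw [mulVec_sub]
    abel
  set h : ι → ℝ := Pi.single y 1 - fun _ => (Fintype.card ι : ℝ)⁻¹ with hh
  have hsum : ∑ z, h z = 0 := by simp [hh, hcard]
  set hC : ι → ℂ := fun z => (h z : ℂ) with hhC
  have hzero : Tendsto (fun n : ℕ => M n ^ n *ᵥ hC) atTop (𝓝 0) := by
    rw [tendsto_zero_iff_norm_tendsto_zero]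
    refine tendsto_order.2 ⟨fun r hr => Eventually.of_forall fun n => hr.trans_le (norm_nonneg _),
      fun ε hε => ?_⟩
    obtain ⟨k, hk⟩ := pow_mulVec_tendsto_zero hrow hcol hc0 hc hsum hε
    have hlim : Tendsto (fun n => ‖M n ^ k *ᵥ hC‖) atTop
        (𝓝 ‖(P.map Complex.ofReal) ^ k *ᵥ hC‖) :=
      ((((continuous_id.pow k).matrix_mulVec continuous_const).tendsto
        (P.map Complex.ofReal)).comp hMP).norm
    have hnorm : ‖(P.map Complex.ofReal) ^ k *ᵥ hC‖ < ε := by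
      have h3 : (P.map Complex.ofReal) ^ k *ᵥ hC = fun z => (((P ^ k) *ᵥ h) z : ℂ) := by
        have h4 : (P.map Complex.ofReal) ^ k = (P ^ k).map Complex.ofRealHom :=
          (map_pow (Complex.ofRealHom.mapMatrix) P k).symm
        rw [h4]
        ext z
        simp [mulVec, dotProduct, hhC]
      rw [h3]
      refine (pi_norm_lt_iff hε).2 fun z => ?_
      rw [Complex.norm_real]
      exact (norm_le_pi_norm _ z).trans_lt hk
    filter_upwards [hlim.eventually (gt_mem_nhds hnorm), eventually_ge_atTop k] with n hn hkn
    have h5 : M n ^ n *ᵥ hC = M n ^ (n - k) *ᵥ (M n ^ k *ᵥ hC) := by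
      rw [mulVec_mulVec, ← pow_add, Nat.sub_add_cancel hkn]
    rw [h5]
    exact ((linfty_opNorm_mulVec _ _).trans
      (mul_le_of_le_one_left (norm_nonneg _) (norm_pow_le_one_of_norm_le_one (hM n) _))).trans_lt hn
  have hfin := (tendsto_pi_nhds.1 (hzero.add (hone.const_smul ((Fintype.card ι : ℂ)⁻¹)))) x
  have hval : ((0 : ι → ℂ) + (Fintype.card ι : ℂ)⁻¹ • (Complex.exp ((-a : ℝ) : ℂ) • 1)) x
      = (((Fintype.card ι : ℝ)⁻¹ * Real.exp (-a) : ℝ) : ℂ) := by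
    simp
  rw [hval] at hfin
  refine hfin.congr fun n => ?_
  rw [← mulVec_smul, ← mulVec_add]
  have : hC + (Fintype.card ι : ℂ)⁻¹ • 1 = Pi.single y 1 := by
    ext z
    simp [hhC, hh, Pi.single_apply, apply_ite Complex.ofReal]
  rw [this, mulVec_single_one]
  rfl

end MarkovPerturbation

section Convolution

variable {Γ : Type*} [Group Γ]

lemma summable_mul_translate {ν μ : Γ → ℝ} (hν : Summable ν) (hμ : Summable μ)
    (hν0 : 0 ≤ ν) (hμ0 : 0 ≤ μ) : Summable (fun p : Γ × Γ => ν p.1 * μ (p.1⁻¹ * p.2)) := by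
  have h := hν.mul_of_nonneg hμ hν0 hμ0
  let e : Γ × Γ ≃ Γ × Γ :=
    { toFun := fun p => (p.1, p.1⁻¹ * p.2)
      invFun := fun p => (p.1, p.1 * p.2)
      left_inv := fun p => by simp
      right_inv := fun p => by simp }
  exact e.summable_iff.2 h

lemma conv_nonneg {ν μ : Γ → ℝ} (hν0 : 0 ≤ ν) (hμ0 : 0 ≤ μ) : 0 ≤ conv ν μ := fun _ =>
  tsum_nonneg fun h => mul_nonneg (hν0 h) (hμ0 _)

lemma summable_conv {ν μ : Γ → ℝ} (hν : Summable ν) (hμ : Summable μ)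
    (hν0 : 0 ≤ ν) (hμ0 : 0 ≤ μ) : Summable (conv ν μ) :=
  (summable_mul_translate hν hμ hν0 hμ0).prod_symm.prod

lemma norm_smul_le_of_norm_le_one {A : Type*} [SeminormedAddCommGroup A] [NormedSpace ℝ A]
    {r : ℝ} (hr : 0 ≤ r)
    {a : A} (ha : ‖a‖ ≤ 1) : ‖r • a‖ ≤ r := by
  rw [norm_smul, Real.norm_of_nonneg hr]
  exact mul_le_of_le_one_right hr ha

/-- Integrating a multiplicative map turns convolution into multiplication. -/
lemma tsum_conv_smul {A : Type*} [NormedRing A] [NormedAlgebra ℝ A] [CompleteSpace A]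
    {ρ : Γ → A} (hρ : ∀ a b, ρ (a * b) = ρ a * ρ b) (hρ1 : ∀ a, ‖ρ a‖ ≤ 1) {ν μ : Γ → ℝ}
    (hν : Summable ν) (hμ : Summable μ) (hν0 : 0 ≤ ν) (hμ0 : 0 ≤ μ) :
    ∑' s, conv ν μ s • ρ s = (∑' s, ν s • ρ s) * ∑' s, μ s • ρ s := by
  have hsν : Summable fun s => ‖ν s • ρ s‖ :=
    Summable.of_nonneg_of_le (fun _ => norm_nonneg _)
      (fun s => norm_smul_le_of_norm_le_one (hν0 s) (hρ1 s)) hν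
  have hsμ : Summable fun s => ‖μ s • ρ s‖ :=
    Summable.of_nonneg_of_le (fun _ => norm_nonneg _)
      (fun s => norm_smul_le_of_norm_le_one (hμ0 s) (hρ1 s)) hμ
  have hst := summable_mul_translate hν hμ hν0 hμ0
  have hF : Summable fun p : Γ × Γ => (ν p.1 * μ (p.1⁻¹ * p.2)) • ρ p.2 :=
    Summable.of_norm_bounded hst fun p =>
      norm_smul_le_of_norm_le_one (mul_nonneg (hν0 _) (hμ0 _)) (hρ1 _)
  rw [tsum_mul_tsum_of_summable_norm hsν hsμ]
  let e : Γ × Γ ≃ Γ × Γ :=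
    { toFun := fun p => (p.1, p.1 * p.2)
      invFun := fun p => (p.1, p.1⁻¹ * p.2)
      left_inv := fun p => by simp
      right_inv := fun p => by simp }
  have h1 : ∑' z : Γ × Γ, ν z.1 • ρ z.1 * μ z.2 • ρ z.2
      = ∑' p : Γ × Γ, (ν p.1 * μ (p.1⁻¹ * p.2)) • ρ p.2 := by
    rw [← e.tsum_eq (fun p : Γ × Γ => (ν p.1 * μ (p.1⁻¹ * p.2)) • ρ p.2)]
    refine tsum_congr fun z => ?_
    simp [e, hρ, smul_smul]
    rw [mul_comm]
  rw [h1, ← (Equiv.prodComm Γ Γ).tsum_eq, Summable.tsum_prod (by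
    exact (Equiv.prodComm Γ Γ).summable_iff.2 hF)]
  refine tsum_congr fun g => ?_
  rw [conv]
  simp only [Equiv.prodComm_apply, Prod.swap]
  exact (Summable.tsum_smul_const (hst.prod_symm.prod_factor g) (ρ g)).symm

lemma convPow_nonneg {μ : Γ → ℝ} (hμ0 : 0 ≤ μ) (n : ℕ) : 0 ≤ convPow μ n := by
  induction n with
  | zero => intro g; simp only [convPow]; split_ifs <;> simp
  | succ n ih => exact conv_nonneg ih hμ0

lemma summable_convPow {μ : Γ → ℝ} (hμ : Summable μ) (hμ0 : 0 ≤ μ) (n : ℕ) :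
    Summable (convPow μ n) := by
  induction n with
  | zero => exact (hasSum_ite_eq (1 : Γ) (1 : ℝ)).summable
  | succ n ih => exact summable_conv ih hμ (convPow_nonneg hμ0 n) hμ0

lemma tsum_convPow_smul {A : Type*} [NormedRing A] [NormedAlgebra ℝ A] [CompleteSpace A]
    {ρ : Γ → A} (hρone : ρ 1 = 1) (hρ : ∀ a b, ρ (a * b) = ρ a * ρ b) (hρ1 : ∀ a, ‖ρ a‖ ≤ 1)
    {μ : Γ → ℝ} (hμ : Summable μ) (hμ0 : 0 ≤ μ) (n : ℕ) :
    ∑' s, convPow μ n s • ρ s = (∑' s, μ s • ρ s) ^ n := by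
  induction n with
  | zero =>
    rw [pow_zero, tsum_eq_single 1]
    · simp [convPow, hρone]
    · intro g hg; simp [convPow, hg]
  | succ n ih =>
    rw [pow_succ, ← ih]
    exact tsum_conv_smul hρ hρ1 (summable_convPow hμ hμ0 n) hμ (convPow_nonneg hμ0 n) hμ0

lemma isProb_convPow {μ : Γ → ℝ} (hμ : IsProb μ) (n : ℕ) : IsProb (convPow μ n) := by
  refine ⟨fun g => convPow_nonneg hμ.1 n g, ?_⟩
  have h := tsum_convPow_smul (A := ℝ) (ρ := fun _ : Γ => 1) rfl (by simp) (by simp)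
    hμ.2.summable hμ.1 n
  simp only [smul_eq_mul, mul_one, hμ.2.tsum_eq, one_pow] at h
  rw [← h]
  exact (summable_convPow hμ.2.summable hμ.1 n).hasSum

lemma convPow_add_pos {μ : Γ → ℝ} (hμ : IsProb μ) {a b : ℕ} {g h : Γ} (hg : 0 < convPow μ a g)
    (hh : 0 < convPow μ b h) : 0 < convPow μ (a + b) (g * h) := by
  induction b generalizing h with
  | zero =>
    have : h = 1 := by
      by_contra h1
      simp [convPow, h1] at hh
    simpa [this] using hg
  | succ b ih =>
    have h0 := fun n => convPow_nonneg hμ.1 n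
    obtain ⟨k, hk⟩ : ∃ k, 0 < convPow μ b k * μ (k⁻¹ * h) := by
      by_contra! hcon
      exact hh.not_ge (tsum_nonpos hcon)
    have hk1 : 0 < convPow μ b k := pos_of_mul_pos_left hk (hμ.1 _)
    have hk2 : 0 < μ (k⁻¹ * h) := pos_of_mul_pos_right hk (h0 b k)
    have hsum : Summable fun x => convPow μ (a + b) x * μ (x⁻¹ * (g * h)) :=
      (summable_mul_translate (summable_convPow hμ.2.summable hμ.1 (a + b)) hμ.2.summable
        (h0 _) hμ.1).prod_symm.prod_factor (g * h)
    refine hsum.tsum_pos (fun x => mul_nonneg (h0 _ x) (hμ.1 _)) (g * k) ?_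
    refine mul_pos (ih hk1) ?_
    simpa [mul_assoc] using hk2

lemma eventually_convPow_pos {μ : Γ → ℝ} (hμ : IsProb μ) (hnd : Nondeg μ) (hap : Aperiodic μ)
    (g : Γ) : ∀ᶠ n in atTop, 0 < convPow μ n g := by
  obtain ⟨k, hk⟩ : ∃ k, 0 < convPow μ k g := by
    refine Subsemigroup.closure_induction (fun x hx => ⟨1, ?_⟩) ?_ (hnd g)
    · have : convPow μ 1 x = μ x := by
        simp only [convPow, conv]
        rw [tsum_eq_single 1]
        · simp
        · intro y hy; simp [hy]
      rw [this]; exact hx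
    · rintro x y _ _ ⟨a, ha⟩ ⟨b, hb⟩
      exact ⟨a + b, convPow_add_pos hμ ha hb⟩
  obtain ⟨N, hN⟩ := hap
  filter_upwards [eventually_ge_atTop (k + N)] with n hn
  have h := convPow_add_pos hμ hk (hN (n - k) (by omega))
  rwa [mul_one, Nat.add_sub_cancel' (by omega)] at h

end Convolution

section Cocycle

variable {Γ : Type*} [Group Γ] {Λ : Subgroup Γ} {m : ℕ}

namespace RepSystem

variable (R : RepSystem Λ)

lemma rep_rep_mul (g s : Γ) : R.rep (R.rep g * s) = R.rep (g * s) := by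
  have h := R.rep_coset (R.rep g * s) _ (R.rep_spec g)
  rw [← h]
  congr 1
  group

/-- The right action of the group on the representatives. -/
def act (x : R.Δ) (s : Γ) : R.Δ := ⟨R.rep (x * s), R.rep_mem _⟩

lemma act_one (x : R.Δ) : R.act x 1 = x := Subtype.ext (by simp [act, R.rep_idem])

lemma act_mul (x : R.Δ) (s t : Γ) : R.act x (s * t) = R.act (R.act x s) t :=
  Subtype.ext (by simp [act, R.rep_rep_mul, mul_assoc])

lemma act_eq_iff (x y : R.Δ) (s : Γ) : R.act x s = y ↔ x = R.act y s⁻¹ := by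
  constructor
  · rintro rfl; rw [← act_mul]; simp [act_one]
  · rintro rfl; rw [← act_mul]; simp [act_one]

lemma exists_act_eq (x y : R.Δ) : R.act x ((x : Γ)⁻¹ * y) = y :=
  Subtype.ext (by simp [act, R.rep_idem])

instance : Nonempty R.Δ := ⟨⟨1, R.one_mem⟩⟩

lemma card_eq_index (hN : Λ.Normal) : Fintype.card R.Δ = Λ.index := by
  rw [← Nat.card_eq_fintype_card, Subgroup.index]
  refine Nat.card_congr (Equiv.ofBijective (fun x : R.Δ => ((x : Γ) : Γ ⧸ Λ)) ⟨?_, ?_⟩)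
  · intro x y hxy
    have h := (hN.mem_comm_iff).1 (QuotientGroup.eq.1 hxy)
    have h2 := R.rep_coset x _ h
    apply Subtype.ext
    rw [← R.rep_idem x x.2, ← h2]
    simp [R.rep_idem]
  · intro q
    obtain ⟨g, rfl⟩ := QuotientGroup.mk_surjective q
    refine ⟨⟨R.rep g, R.rep_mem g⟩, ?_⟩
    exact QuotientGroup.eq.2 ((hN.mem_comm_iff).1 (R.rep_spec g))

end RepSystem

variable (ψ : Λ ≃* Multiplicative (Fin m → ℤ)) (R : RepSystem Λ)

lemma cocycle_mul (x s t : Γ) :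
    cocycle ψ R x (s * t) = cocycle ψ R x s + cocycle ψ R (R.rep (x * s)) t := by
  simp only [cocycle]
  rw [← toAdd_mul, ← map_mul]
  congr 2
  apply Subtype.ext
  simp [R.rep_rep_mul, mul_assoc]

lemma cocycle_one (x : R.Δ) : cocycle ψ R x 1 = 0 := by
  have : (⟨(x : Γ) * 1 * (R.rep (x * 1))⁻¹, R.rep_spec (x * 1)⟩ : Λ) = 1 :=
    Subtype.ext (by simp [R.rep_idem])
  rw [cocycle, this]
  simp

lemma act_conj (x : R.Δ) (v : Λ) : R.act x ((x : Γ)⁻¹ * v * x) = x :=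
  Subtype.ext (by
    have := R.rep_coset x v v.2
    simp [RepSystem.act, mul_assoc, this, R.rep_idem])

lemma cocycle_conj (x : R.Δ) (v : Λ) :
    cocycle ψ R x ((x : Γ)⁻¹ * v * x) = Multiplicative.toAdd (ψ v) := by
  have h := congrArg Subtype.val (act_conj R x v)
  simp only [RepSystem.act] at h
  rw [cocycle]
  congr 2
  apply Subtype.ext
  change (x : Γ) * ((x : Γ)⁻¹ * v * x) * (R.rep (x * ((x : Γ)⁻¹ * v * x)))⁻¹ = v
  rw [h]
  simp [mul_assoc]

lemma vhat_mul (v : Fin m → ℝ) (x : R.Δ) (s t : Γ) :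
    vhat ψ R v x (s * t) = vhat ψ R v x s + vhat ψ R v (R.act x s) t := by
  simp [vhat, cocycle_mul, RepSystem.act, mul_add, Finset.sum_add_distrib]

lemma vhat_one (v : Fin m → ℝ) (x : R.Δ) : vhat ψ R v x 1 = 0 := by
  simp [vhat, cocycle_one]

lemma abs_cocycle_le_wordLength {S₀ : Finset Γ} (hsymm : ∀ s ∈ S₀, s⁻¹ ∈ S₀)
    (hgen : Subgroup.closure (S₀ : Set Γ) = ⊤) :
    ∃ C : ℝ, ∀ (x : R.Δ) (g : Γ) (i : Fin m),
      |(cocycle ψ R x g i : ℝ)| ≤ C * wordLength S₀ g := by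
  obtain ⟨C, hC⟩ : ∃ C : ℝ, ∀ (x : R.Δ) (s : S₀) (i : Fin m),
      |(cocycle ψ R x s i : ℝ)| ≤ C := by
    obtain ⟨C, hC⟩ := Finite.exists_le (fun p : R.Δ × S₀ × Fin m =>
      |(cocycle ψ R p.1 p.2.1 p.2.2 : ℝ)|)
    exact ⟨C, fun x s i => hC (x, s, i)⟩
  refine ⟨C, fun x g i => ?_⟩
  have hlist : ∀ (l : List Γ), (∀ s ∈ l, s ∈ S₀) → ∀ x : R.Δ,
      |(cocycle ψ R x l.prod i : ℝ)| ≤ C * l.length := by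
    intro l
    induction l with
    | nil => intro _ x; simp [cocycle_one]
    | cons s l ih =>
      intro hl x
      have h1 := hC x ⟨s, hl s (by simp)⟩ i
      have h2 := ih (fun t ht => hl t (by simp [ht])) (R.act x s)
      rw [List.prod_cons, cocycle_mul]
      simp only [Pi.add_apply, Int.cast_add, List.length_cons, Nat.cast_add, Nat.cast_one]
      refine (abs_add_le _ _).trans ?_
      simp only [RepSystem.act] at h1 h2
      linarith
  have hne : {n : ℕ | ∃ l : List Γ, (∀ s ∈ l, s ∈ S₀) ∧ l.length = n ∧ l.prod = g}.Nonempty := by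
    have hg : g ∈ (Subgroup.closure (S₀ : Set Γ)).toSubmonoid := by rw [hgen]; trivial
    rw [Subgroup.closure_toSubmonoid] at hg
    obtain ⟨l, hl, rfl⟩ := Submonoid.exists_list_of_mem_closure hg
    refine ⟨l.length, l, fun s hs => ?_, rfl, rfl⟩
    rcases hl s hs with h | h
    · exact h
    · simpa using hsymm _ h
  obtain ⟨l, hl, hlen, rfl⟩ := Nat.sInf_mem hne
  have := hlist l hl x
  rw [hlen] at this
  exact this

lemma summable_mul_cocycle_sq {μ : Γ → ℝ} (hμ : IsProb μ) (hmom : FinSecondMoment μ) (x : R.Δ)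
    (i : Fin m) : Summable fun s => μ s * (cocycle ψ R x s i : ℝ) ^ 2 := by
  obtain ⟨S₀, hsymm, hgen, hS⟩ := hmom
  obtain ⟨C, hC⟩ := abs_cocycle_le_wordLength ψ R hsymm hgen
  refine Summable.of_nonneg_of_le (fun s => mul_nonneg (hμ.1 s) (sq_nonneg _)) (fun s => ?_)
    (hS.mul_left (C ^ 2))
  have h := sq_le_sq' (by linarith [neg_abs_le ((cocycle ψ R x s i : ℝ)), hC x s i])
    ((le_abs_self _).trans (hC x s i))
  calc μ s * (cocycle ψ R x s i : ℝ) ^ 2 ≤ μ s * (C * wordLength S₀ s) ^ 2 :=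
        mul_le_mul_of_nonneg_left h (hμ.1 s)
    _ = _ := by ring

end Cocycle

section FourierOp

open scoped Topology

attribute [local instance] Matrix.linftyOpNormedRing Matrix.linftyOpNormedAlgebra

variable {Γ : Type*} [Group Γ] {Λ : Subgroup Γ} {m : ℕ}
variable (ψ : Λ ≃* Multiplicative (Fin m → ℤ)) (R : RepSystem Λ)

/-- The monomial representation attached to a character of `Λ`. -/
noncomputable def monomialRep (v : Fin m → ℝ) (s : Γ) : Matrix R.Δ R.Δ ℂ :=
  Matrix.of fun x y =>
    if R.act x s = y then Complex.exp (Complex.I * (vhat ψ R v x s : ℝ)) else 0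

/-- The matrix-valued Fourier transform. -/
noncomputable def fourierOp (ν : Γ → ℝ) (v : Fin m → ℝ) : Matrix R.Δ R.Δ ℂ :=
  ∑' s, ν s • monomialRep ψ R v s

/-- The transition matrix of the walk induced on the representatives. -/
noncomputable def transMat (ν : Γ → ℝ) : Matrix R.Δ R.Δ ℝ :=
  Matrix.of fun x y => ∑' s, if R.act x s = y then ν s else 0

lemma monomialRep_one (v : Fin m → ℝ) : monomialRep ψ R v 1 = 1 := by
  ext x y
  simp [monomialRep, R.act_one, vhat_one, Matrix.one_apply]

lemma monomialRep_mul (v : Fin m → ℝ) (s t : Γ) :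
    monomialRep ψ R v (s * t) = monomialRep ψ R v s * monomialRep ψ R v t := by
  ext x y
  rw [Matrix.mul_apply, Finset.sum_eq_single (R.act x s)]
  · simp [monomialRep, R.act_mul, vhat_mul, mul_add, Complex.exp_add]
  · intro z _ hz
    simp [monomialRep, hz.symm]
  · simp

lemma norm_cexp_I_mul (r : ℝ) : ‖Complex.exp (Complex.I * (r : ℝ))‖ = 1 := by
  rw [mul_comm, Complex.norm_exp_ofReal_mul_I]

lemma norm_monomialRep_le (v : Fin m → ℝ) (s : Γ) : ‖monomialRep ψ R v s‖ ≤ 1 := by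
  rw [linfty_opNorm_def]
  norm_cast
  refine Finset.sup_le fun x _ => ?_
  rw [Finset.sum_eq_single (R.act x s)]
  · rw [← NNReal.coe_le_coe]
    simp [monomialRep]
  · intro y _ hy
    simp [monomialRep, hy.symm]
  · simp

lemma norm_monomialRep_apply_le (v : Fin m → ℝ) (s : Γ) (x y : R.Δ) :
    ‖monomialRep ψ R v s x y‖ ≤ 1 := by
  simp only [monomialRep, Matrix.of_apply]
  split_ifs
  · rw [norm_cexp_I_mul]
  · simp

variable {ψ R}

lemma summable_smul_monomialRep {ν : Γ → ℝ} (hν : IsProb ν) (v : Fin m → ℝ) :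
    Summable fun s => ν s • monomialRep ψ R v s :=
  Summable.of_norm_bounded hν.2.summable fun s =>
    norm_smul_le_of_norm_le_one (hν.1 s) (norm_monomialRep_le ψ R v s)

lemma fourierOp_apply {ν : Γ → ℝ} (hν : IsProb ν) (v : Fin m → ℝ) (x y : R.Δ) :
    fourierOp ψ R ν v x y = ∑' s, ν s • monomialRep ψ R v s x y := by
  have h := summable_smul_monomialRep (ψ := ψ) (R := R) hν v
  have h1 := (Pi.hasSum.1 (Pi.hasSum.1 h.hasSum x)) y
  exact h1.tsum_eq.symm

lemma norm_fourierOp_le {ν : Γ → ℝ} (hν : IsProb ν) (v : Fin m → ℝ) :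
    ‖fourierOp ψ R ν v‖ ≤ 1 :=
  tsum_of_norm_bounded hν.2 fun s =>
    norm_smul_le_of_norm_le_one (hν.1 s) (norm_monomialRep_le ψ R v s)

lemma fourierOp_convPow {μ : Γ → ℝ} (hμ : IsProb μ) (n : ℕ) (v : Fin m → ℝ) :
    fourierOp ψ R (convPow μ n) v = fourierOp ψ R μ v ^ n :=
  tsum_convPow_smul (monomialRep_one ψ R v) (monomialRep_mul ψ R v) (norm_monomialRep_le ψ R v)
    hμ.2.summable hμ.1 n

lemma continuous_vhat (x s : Γ) : Continuous fun v => vhat ψ R v x s := by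
  unfold vhat
  fun_prop

lemma continuous_fourierOp {ν : Γ → ℝ} (hν : IsProb ν) : Continuous (fourierOp ψ R ν) := by
  refine continuous_tsum (fun s => ?_) hν.2.summable fun s v =>
    norm_smul_le_of_norm_le_one (hν.1 s) (norm_monomialRep_le ψ R v s)
  suffices h : Continuous fun v => monomialRep ψ R v s from h.const_smul (ν s)
  refine continuous_matrix fun x y => ?_
  simp only [monomialRep, Matrix.of_apply]
  split_ifs
  · have := continuous_vhat (ψ := ψ) (R := R) x s
    fun_prop
  · fun_prop

lemma fourierOp_mulVec {ν : Γ → ℝ} (hν : IsProb ν) (v : Fin m → ℝ) (f : R.Δ → ℂ) (x : R.Δ) :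
    (fourierOp ψ R ν v *ᵥ f) x =
      ∑' s, ν s • (Complex.exp (Complex.I * (vhat ψ R v x s : ℝ)) * f (R.act x s)) := by
  have hs : ∀ y, Summable fun s => ν s • monomialRep ψ R v s x y := fun y =>
    Summable.of_norm_bounded hν.2.summable fun s =>
      norm_smul_le_of_norm_le_one (hν.1 s) (norm_monomialRep_apply_le ψ R v s x y)
  simp only [mulVec, dotProduct, fourierOp_apply hν]
  simp_rw [← tsum_mul_right]
  rw [← Summable.tsum_finsetSum (fun y _ => (hs y).mul_right _)]
  refine tsum_congr fun s => ?_
  rw [Finset.sum_eq_single (R.act x s)]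
  · simp [monomialRep, mul_assoc]
  · intro y _ hy
    simp [monomialRep, hy.symm]
  · simp

lemma summable_ite_act {ν : Γ → ℝ} (hν : IsProb ν) (x y : R.Δ) :
    Summable fun s => if R.act x s = y then ν s else 0 :=
  Summable.of_norm_bounded hν.2.summable fun s => by
    split_ifs
    · exact (Real.norm_of_nonneg (hν.1 s)).le
    · simpa using hν.1 s

lemma transMat_mulVec {ν : Γ → ℝ} (hν : IsProb ν) (f : R.Δ → ℝ) (x : R.Δ) :
    (transMat R ν *ᵥ f) x = ∑' s, ν s * f (R.act x s) := by
  simp only [mulVec, dotProduct, transMat, Matrix.of_apply]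
  simp_rw [← tsum_mul_right]
  rw [← Summable.tsum_finsetSum (fun y _ => (summable_ite_act hν x y).mul_right _)]
  refine tsum_congr fun s => ?_
  simp [ite_mul]

lemma transMat_mulVec_one {ν : Γ → ℝ} (hν : IsProb ν) : transMat R ν *ᵥ 1 = 1 := by
  ext x
  rw [transMat_mulVec hν]
  simpa using hν.2.tsum_eq

lemma one_vecMul_transMat {ν : Γ → ℝ} (hν : IsProb ν) : 1 ᵥ* transMat R ν = 1 := by
  ext y
  simp only [vecMul, dotProduct, transMat, Matrix.of_apply, Pi.one_apply, one_mul]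
  rw [← Summable.tsum_finsetSum (fun x _ => summable_ite_act hν x y)]
  simp_rw [R.act_eq_iff]
  simpa using hν.2.tsum_eq

variable (ψ) in
lemma fourierOp_zero {ν : Γ → ℝ} (hν : IsProb ν) :
    fourierOp ψ R ν 0 = (transMat R ν).map Complex.ofReal := by
  ext x y
  rw [fourierOp_apply hν]
  simp only [monomialRep, transMat, Matrix.of_apply, Matrix.map_apply, vhat, Complex.ofReal_tsum]
  refine tsum_congr fun s => ?_
  split_ifs <;> simp

lemma transMat_convPow (ψ : Λ ≃* Multiplicative (Fin m → ℤ)) {μ : Γ → ℝ} (hμ : IsProb μ) (n : ℕ) :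
    transMat R (convPow μ n) = transMat R μ ^ n := by
  have h := fourierOp_convPow (ψ := ψ) (R := R) hμ n 0
  rw [fourierOp_zero ψ (isProb_convPow hμ n), fourierOp_zero ψ hμ] at h
  have h2 : (transMat R μ).map Complex.ofReal ^ n = (transMat R μ ^ n).map Complex.ofReal :=
    (map_pow (Complex.ofRealHom.mapMatrix) (transMat R μ) n).symm
  rw [h2] at h
  exact Matrix.map_injective Complex.ofReal_injective h

lemma exists_transMat_pow_ge (ψ : Λ ≃* Multiplicative (Fin m → ℤ)) {μ : Γ → ℝ}
    (hμ : IsProb μ) (hnd : Nondeg μ) (hap : Aperiodic μ) :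
    ∃ (N : ℕ) (c : ℝ), 0 < c ∧ ∀ x y, c ≤ (transMat R μ ^ N) x y := by
  have h1 : ∀ᶠ n in atTop, ∀ p : R.Δ × R.Δ, 0 < convPow μ n ((p.1 : Γ)⁻¹ * p.2) :=
    eventually_all.2 fun p => eventually_convPow_pos hμ hnd hap _
  obtain ⟨N, hN⟩ := h1.exists
  obtain ⟨c, hc0, hc⟩ : ∃ c : ℝ, 0 < c ∧ ∀ p : R.Δ × R.Δ, c ≤ convPow μ N ((p.1 : Γ)⁻¹ * p.2) := by
    obtain ⟨p, hp⟩ := Finite.exists_min fun p : R.Δ × R.Δ => convPow μ N ((p.1 : Γ)⁻¹ * p.2)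
    exact ⟨_, hN p, hp⟩
  refine ⟨N, c, hc0, fun x y => (hc (x, y)).trans ?_⟩
  rw [← transMat_convPow ψ hμ]
  have h2 := (summable_ite_act (isProb_convPow hμ N) x y).le_tsum ((x : Γ)⁻¹ * y)
    (fun s _ => by split_ifs; exacts [(isProb_convPow hμ N).1 s, le_rfl])
  simpa [R.exists_act_eq, transMat] using h2

end FourierOp

section Domination

attribute [local instance] Matrix.linftyOpNormedRing Matrix.linftyOpNormedAlgebra

lemma norm_add_mul_cexp_le {p q r θ : ℝ} (hr : 0 ≤ r) (hp : r ≤ p) (hq : r ≤ q)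
    (hθ : |θ| ≤ Real.pi) :
    ‖(p : ℂ) + q * Complex.exp (Complex.I * θ)‖ ≤ p + q - r * (θ ^ 2 / Real.pi ^ 2) := by
  have hpi := Real.pi_pos
  have hθ' := abs_le.1 hθ
  have h1 : ‖1 + Complex.exp (Complex.I * θ)‖ ≤ 2 - θ ^ 2 / Real.pi ^ 2 := by
    have h2 : 1 + Complex.exp (Complex.I * θ)
        = Complex.exp (Complex.I * ((θ / 2 : ℝ) : ℂ)) * ((2 * Real.cos (θ / 2) : ℝ) : ℂ) := by
      push_cast
      rw [Complex.cos, mul_div_cancel₀ _ (two_ne_zero' ℂ), mul_add, ← Complex.exp_add,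
        ← Complex.exp_add, add_comm]
      congr 1
      · congr 1; ring
      · rw [← Complex.exp_zero]; congr 1; ring
    have h3 : 0 ≤ Real.cos (θ / 2) := Real.cos_nonneg_of_neg_pi_div_two_le_of_le
      (by linarith) (by linarith)
    have h4 := Real.cos_le_one_sub_mul_cos_sq (x := θ / 2) (by
      rw [abs_le]; constructor <;> linarith)
    rw [h2, norm_mul, norm_cexp_I_mul, one_mul, Complex.norm_real,
      Real.norm_of_nonneg (by positivity)]
    have h5 : 2 * (1 - 2 / Real.pi ^ 2 * (θ / 2) ^ 2) = 2 - θ ^ 2 / Real.pi ^ 2 := by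
      field_simp
    linarith
  have h6 : (p : ℂ) + q * Complex.exp (Complex.I * θ) = ((p - r : ℝ) : ℂ)
      + ((q - r : ℝ) : ℂ) * Complex.exp (Complex.I * θ)
      + (r : ℂ) * (1 + Complex.exp (Complex.I * θ)) := by
    push_cast; ring
  rw [h6]
  refine (norm_add₃_le).trans ?_
  rw [norm_mul, norm_mul, norm_cexp_I_mul, Complex.norm_real, Complex.norm_real, Complex.norm_real,
    Real.norm_of_nonneg (sub_nonneg.2 hp), Real.norm_of_nonneg (sub_nonneg.2 hq),
    Real.norm_of_nonneg hr]
  have := mul_le_mul_of_nonneg_left h1 hr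
  linarith

lemma norm_tsum_smul_le {α : Type*} {w : α → ℝ} (hw0 : 0 ≤ w) (hw : Summable w) {z : α → ℂ}
    (hz : ∀ s, ‖z s‖ ≤ 1) {a b : α} (hab : a ≠ b) :
    ‖∑' s, w s • z s‖ ≤ ∑' s, w s - (w a + w b - ‖w a • z a + w b • z b‖) := by
  have hs : Summable fun s => w s • z s :=
    Summable.of_norm_bounded hw fun s => norm_smul_le_of_norm_le_one (hw0 s) (hz s)
  rw [← hs.sum_add_tsum_subtype_compl {a, b}, ← hw.sum_add_tsum_subtype_compl {a, b},
    Finset.sum_pair hab, Finset.sum_pair hab]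
  have h1 : ‖∑' x : {x // x ∉ ({a, b} : Finset α)}, w x • z x‖
      ≤ ∑' x : {x // x ∉ ({a, b} : Finset α)}, w x :=
    tsum_of_norm_bounded (hw.subtype _).hasSum fun x =>
      norm_smul_le_of_norm_le_one (hw0 x) (hz x)
  refine (norm_add_le _ _).trans ?_
  linarith

lemma norm_apply_le_linfty_opNorm {ι : Type*} [Fintype ι] [DecidableEq ι] (A : Matrix ι ι ℂ)
    (x y : ι) : ‖A x y‖ ≤ ‖A‖ := by
  have h1 : ∑ j, ‖A x j‖₊ ≤ Finset.univ.sup fun i => ∑ j, ‖A i j‖₊ :=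
    Finset.le_sup (f := fun i => ∑ j, ‖A i j‖₊) (Finset.mem_univ x)
  have h2 : ‖A x y‖₊ ≤ ∑ j, ‖A x j‖₊ :=
    Finset.single_le_sum (f := fun j => ‖A x j‖₊) (fun _ _ => zero_le) (Finset.mem_univ y)
  rw [linfty_opNorm_def]
  exact_mod_cast h2.trans h1

variable {Γ : Type*} [Group Γ] {Λ : Subgroup Γ} {m : ℕ}
variable {ψ : Λ ≃* Multiplicative (Fin m → ℤ)} {R : RepSystem Λ}

lemma sum_norm_fourierOp_le {ν : Γ → ℝ} (hν : IsProb ν) {q : ℝ} (hq : 0 ≤ q) (x : R.Δ)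
    (i : Fin m) (h1 : q ≤ ν 1)
    (h2 : q ≤ ν ((x : Γ)⁻¹ * ψ.symm (Multiplicative.ofAdd (Pi.single i 1)) * x))
    {v : Fin m → ℝ} (hv : |v i| ≤ Real.pi) :
    ∑ y, ‖fourierOp ψ R ν v x y‖ ≤ 1 - q * (v i ^ 2 / Real.pi ^ 2) := by
  set b : Γ := (x : Γ)⁻¹ * ψ.symm (Multiplicative.ofAdd (Pi.single i 1)) * x with hb
  set w : R.Δ → Γ → ℝ := fun y s => if R.act x s = y then ν s else 0 with hw
  set z : Γ → ℂ := fun s => Complex.exp (Complex.I * (vhat ψ R v x s : ℝ)) with hz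
  have hz1 : ∀ s, ‖z s‖ ≤ 1 := fun s => (norm_cexp_I_mul _).le
  have hw0 : ∀ y, 0 ≤ w y := fun y s => by simp only [hw]; split_ifs; exacts [hν.1 s, le_rfl]
  have hent : ∀ y, fourierOp ψ R ν v x y = ∑' s, w y s • z s := fun y => by
    rw [fourierOp_apply hν]
    refine tsum_congr fun s => ?_
    simp only [monomialRep, Matrix.of_apply, hw, hz]
    split_ifs <;> simp
  have hbound : ∀ y, ‖fourierOp ψ R ν v x y‖ ≤ transMat R ν x y := fun y => by
    rw [hent]
    exact tsum_of_norm_bounded (summable_ite_act hν x y).hasSum fun s =>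
      norm_smul_le_of_norm_le_one (hw0 y s) (hz1 s)
  have hcoc : cocycle ψ R x b = Pi.single i 1 := by
    rw [hb, cocycle_conj]; simp
  have hb1 : (1 : Γ) ≠ b := fun h => by
    rw [← h, cocycle_one] at hcoc
    simpa using congrFun hcoc i
  have hdiag : ‖fourierOp ψ R ν v x x‖ ≤ transMat R ν x x - q * (v i ^ 2 / Real.pi ^ 2) := by
    rw [hent]
    refine (norm_tsum_smul_le (hw0 x) (summable_ite_act hν x x) hz1 hb1).trans ?_
    have hwa : w x 1 = ν 1 := by simp [hw, R.act_one]
    have hwb : w x b = ν b := by simp only [hw, hb, act_conj, if_true]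
    have hza : z 1 = 1 := by simp [hz, vhat_one]
    have hzb : z b = Complex.exp (Complex.I * (v i : ℝ)) := by
      simp only [hz, vhat, hcoc]
      simp [Pi.single_apply]
    have := norm_add_mul_cexp_le hq h1 h2 hv
    rw [hwa, hwb, hza, hzb]
    simp only [Complex.real_smul, mul_one]
    have h3 : ∑' s, w x s = transMat R ν x x := rfl
    rw [h3]
    linarith
  have hrow : ∑ y, transMat R ν x y = 1 := by
    simpa [mulVec, dotProduct] using congrFun (transMat_mulVec_one (R := R) hν) x
  have hrow' := Finset.add_sum_erase Finset.univ (transMat R ν x) (Finset.mem_univ x)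
  rw [← Finset.add_sum_erase _ _ (Finset.mem_univ x)]
  have := Finset.sum_le_sum fun y (_ : y ∈ Finset.univ.erase x) => hbound y
  linarith

/-- Gaussian domination of the powers of the Fourier operator on the fundamental cube. -/
lemma exists_norm_fourierOp_pow_le (hm : 1 ≤ m) {μ : Γ → ℝ} (hμ : IsProb μ) (hnd : Nondeg μ)
    (hap : Aperiodic μ) :
    ∃ C κ : ℝ, 0 < κ ∧ ∀ (n : ℕ) (v : Fin m → ℝ), (∀ i, |v i| ≤ Real.pi) → ∀ x y : R.Δ,
      ‖(fourierOp ψ R μ v ^ n) x y‖ ≤ C * Real.exp (-κ * (n * ∑ i, v i ^ 2)) := by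
  have hpi := Real.pi_pos
  have hm0 : (0 : ℝ) < m := by exact_mod_cast hm
  have h1 : ∀ᶠ n in atTop, ∀ p : R.Δ × Fin m, 0 < convPow μ n
      ((p.1 : Γ)⁻¹ * ψ.symm (Multiplicative.ofAdd (Pi.single p.2 1)) * p.1) :=
    eventually_all.2 fun p => eventually_convPow_pos hμ hnd hap _
  obtain ⟨N, ⟨hN, hN1⟩, hN0⟩ := ((h1.and (eventually_convPow_pos hμ hnd hap 1)).and
    (eventually_ge_atTop 1)).exists
  have hne : Nonempty (Fin m) := ⟨⟨0, hm⟩⟩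
  obtain ⟨p, hp⟩ := Finite.exists_min fun p : R.Δ × Fin m => convPow μ N
      ((p.1 : Γ)⁻¹ * ψ.symm (Multiplicative.ofAdd (Pi.single p.2 1)) * p.1)
  set q : ℝ := min (convPow μ N 1) (convPow μ N
      ((p.1 : Γ)⁻¹ * ψ.symm (Multiplicative.ofAdd (Pi.single p.2 1)) * p.1)) with hq
  have hq0 : 0 < q := lt_min hN1 (hN p)
  set κ : ℝ := q / (Real.pi ^ 2 * m) with hκ
  have hκ0 : 0 < κ := by positivity
  have hNr : (0 : ℝ) < N := by exact_mod_cast hN0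
  have hbase : ∀ v : Fin m → ℝ, (∀ i, |v i| ≤ Real.pi) →
      ‖fourierOp ψ R μ v ^ N‖ ≤ Real.exp (-κ * ∑ i, v i ^ 2) := by
    intro v hv
    rw [← fourierOp_convPow hμ, linfty_opNorm_def]
    have h2 : ∀ x : R.Δ, ∑ y, ‖fourierOp ψ R (convPow μ N) v x y‖
        ≤ Real.exp (-κ * ∑ i, v i ^ 2) := by
      intro x
      have h3 := Finset.sum_le_sum fun i (_ : i ∈ Finset.univ) =>
        sum_norm_fourierOp_le (isProb_convPow hμ N) hq0.le x i (min_le_left _ _)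
          ((min_le_right _ _).trans (hp (x, i))) (hv i)
      rw [Finset.sum_sub_distrib, ← Finset.mul_sum, ← Finset.sum_div] at h3
      simp only [Finset.sum_const, Finset.card_univ, Fintype.card_fin, nsmul_eq_mul, mul_one] at h3
      have h4 : ∑ y, ‖fourierOp ψ R (convPow μ N) v x y‖ ≤ 1 - κ * ∑ i, v i ^ 2 := by
        refine le_of_mul_le_mul_left (h3.trans (le_of_eq ?_)) hm0
        rw [hκ]
        field_simp
      refine h4.trans ?_
      have := Real.add_one_le_exp (-κ * ∑ i, v i ^ 2)
      linarith
    have h5 : (Finset.univ.sup fun i => ∑ j, ‖fourierOp ψ R (convPow μ N) v i j‖₊)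
        ≤ (⟨Real.exp (-κ * ∑ i, v i ^ 2), (Real.exp_pos _).le⟩ : NNReal) := by
      refine Finset.sup_le fun x _ => ?_
      exact NNReal.coe_le_coe.1 (by push_cast; exact h2 x)
    exact_mod_cast h5
  refine ⟨Real.exp (κ * (m * Real.pi ^ 2)), κ / N, by positivity, fun n v hv x y => ?_⟩
  refine (norm_apply_le_linfty_opNorm _ x y).trans ?_
  have hn : n = N * (n / N) + n % N := (Nat.div_add_mod n N).symm
  have hS0 : 0 ≤ ∑ i, v i ^ 2 := Finset.sum_nonneg fun i _ => sq_nonneg _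
  have hS : ∑ i, v i ^ 2 ≤ m * Real.pi ^ 2 := by
    have := Finset.sum_le_sum fun i (_ : i ∈ Finset.univ) =>
      sq_le_sq.2 ((hv i).trans (le_abs_self _))
    simpa using this
  have hdiv : (n : ℝ) ≤ N * ((n / N : ℕ) : ℝ) + N := by
    have h6 : n ≤ N * (n / N) + N := by
      have := Nat.mod_lt n hN0
      omega
    exact_mod_cast h6
  calc ‖fourierOp ψ R μ v ^ n‖
    _ = ‖(fourierOp ψ R μ v ^ N) ^ (n / N) * fourierOp ψ R μ v ^ (n % N)‖ := by
        rw [← pow_mul, ← pow_add, ← hn]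
    _ ≤ ‖(fourierOp ψ R μ v ^ N) ^ (n / N)‖ * ‖fourierOp ψ R μ v ^ (n % N)‖ := norm_mul_le _ _
    _ ≤ Real.exp (-κ * ∑ i, v i ^ 2) ^ (n / N) * 1 := by
        refine mul_le_mul ?_ ?_ (norm_nonneg _) (by positivity)
        · rcases Nat.eq_zero_or_pos (n / N) with h0 | h0
          · rw [h0, pow_zero, pow_zero]
            simp
          · exact (norm_pow_le' _ h0).trans (pow_le_pow_left₀ (norm_nonneg _) (hbase v hv) _)
        · exact norm_pow_le_one_of_norm_le_one (norm_fourierOp_le hμ v) _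
    _ ≤ _ := by
        rw [mul_one, ← Real.exp_nat_mul, ← Real.exp_add, Real.exp_le_exp]
        have h7 : (n : ℝ) / N ≤ ((n / N : ℕ) : ℝ) + 1 := by
          rw [div_le_iff₀ hNr]; linarith
        have h8 : κ / N * (n * ∑ i, v i ^ 2) = κ * (n / N * ∑ i, v i ^ 2) := by ring
        have h9 := mul_le_mul_of_nonneg_left (mul_le_mul_of_nonneg_right h7 hS0) hκ0.le
        have h10 := mul_le_mul_of_nonneg_left hS hκ0.le
        linarith

end Domination

section GaussianFourier

lemma exists_transpose_mul_self {m : ℕ} {A : Matrix (Fin m) (Fin m) ℝ} (hA : A.PosDef) :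
    ∃ B : Matrix (Fin m) (Fin m) ℝ, A = Bᵀ * B ∧ B.det ≠ 0 ∧ |B.det| = A.det ^ (1 / 2 : ℝ) := by
  obtain ⟨B, hB⟩ : ∃ B : Matrix (Fin m) (Fin m) ℝ, A = Bᵀ * B := by
    open scoped MatrixOrder Matrix.Norms.L2Operator in
    obtain ⟨B, hB⟩ := CStarAlgebra.nonneg_iff_eq_star_mul_self.mp hA.posSemidef.nonneg
    exact ⟨B, by rw [hB, star_eq_conjTranspose, conjTranspose_eq_transpose_of_trivial]⟩
  have hdet : A.det = B.det ^ 2 := by rw [hB, det_mul, det_transpose, sq]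
  refine ⟨B, hB, fun h => ?_, ?_⟩
  · have := hA.det_pos
    rw [hdet, h] at this
    simp at this
  · rw [hdet, ← Real.sqrt_eq_rpow, Real.sqrt_sq_eq_abs]

/-- The Fourier transform of the centred Gaussian with covariance `A⁻¹`. -/
lemma integral_cexp_neg_quadratic {m : ℕ} {A : Matrix (Fin m) (Fin m) ℝ} (hA : A.PosDef)
    (w : Fin m → ℝ) :
    ∫ v : Fin m → ℝ, Complex.exp (-(Complex.I * ((v ⬝ᵥ w : ℝ) : ℂ)))
        * (Real.exp (-(v ⬝ᵥ A *ᵥ v) / 2) : ℂ)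
      = (((2 * Real.pi) ^ m * gauss A w : ℝ) : ℂ) := by
  obtain ⟨B, hB, hB0, hBdet⟩ := exists_transpose_mul_self hA
  have hBu : IsUnit B.det := hB0.isUnit
  set F : (Fin m → ℝ) → ℂ := fun z => Complex.exp (-((1 / 2 : ℝ) : ℂ) * ∑ i, (z i : ℂ) ^ 2
    + ∑ i, (-(Complex.I * (((B⁻¹)ᵀ *ᵥ w) i : ℝ))) * (z i : ℂ)) with hF
  have h1 : ∀ v : Fin m → ℝ, Complex.exp (-(Complex.I * ((v ⬝ᵥ w : ℝ) : ℂ)))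
        * (Real.exp (-(v ⬝ᵥ A *ᵥ v) / 2) : ℂ) = F (Matrix.toLin' B v) := by
    intro v
    have h2 : v ⬝ᵥ A *ᵥ v = ∑ i, (B *ᵥ v) i ^ 2 := by
      rw [hB, ← mulVec_mulVec, dotProduct_mulVec, vecMul_transpose]
      simp [dotProduct, sq]
    have h3 : v ⬝ᵥ w = ∑ i, ((B⁻¹)ᵀ *ᵥ w) i * (B *ᵥ v) i := by
      change _ = ((B⁻¹)ᵀ *ᵥ w) ⬝ᵥ (B *ᵥ v)
      rw [mulVec_transpose, ← dotProduct_mulVec, mulVec_mulVec, nonsing_inv_mul _ hBu, one_mulVec,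
        dotProduct_comm]
    simp only [hF, Matrix.toLin'_apply, h2, h3]
    rw [Complex.ofReal_exp, ← Complex.exp_add]
    congr 1
    push_cast
    rw [Finset.mul_sum, ← Finset.sum_neg_distrib, add_comm]
    congr 1
    · ring
    · exact Finset.sum_congr rfl fun i _ => by ring
  simp_rw [h1]
  have hmeas : Measurable (Matrix.toLin' B) :=
    (LinearMap.continuous_of_finiteDimensional (Matrix.toLin' B)).measurable
  have hFc : Continuous F := by simp only [hF]; fun_prop
  rw [← integral_map hmeas.aemeasurable hFc.aestronglyMeasurable,
    Real.map_matrix_volume_pi_eq_smul_volume_pi hB0, integral_smul_measure,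
    GaussianFourier.integral_cexp_neg_mul_sum_add (by norm_num)]
  have h4 : w ⬝ᵥ A⁻¹ *ᵥ w = ∑ i, ((B⁻¹)ᵀ *ᵥ w) i ^ 2 := by
    rw [hB, Matrix.mul_inv_rev, ← transpose_nonsing_inv, ← mulVec_mulVec, dotProduct_mulVec,
      ← mulVec_transpose]
    simp [dotProduct, sq]
  have h5 : (∑ i, (-(Complex.I * (((B⁻¹)ᵀ *ᵥ w) i : ℝ))) ^ 2) / (4 * ((1 / 2 : ℝ) : ℂ))
      = ((-(w ⬝ᵥ A⁻¹ *ᵥ w) / 2 : ℝ) : ℂ) := by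
    rw [h4]
    push_cast
    simp only [neg_sq, mul_pow, Complex.I_sq, ← Finset.mul_sum]
    ring
  have hpi := Real.pi_pos
  have h6 : ((Real.pi : ℂ) / ((1 / 2 : ℝ) : ℂ)) ^ ((Fintype.card (Fin m) : ℂ) / 2)
      = (((2 * Real.pi) ^ ((m : ℝ) / 2) : ℝ) : ℂ) := by
    rw [Complex.ofReal_cpow (by positivity)]
    push_cast
    simp only [Fintype.card_fin]
    congr 1
    ring
  rw [h5, h6, ENNReal.toReal_ofReal (abs_nonneg _), abs_inv, hBdet, Complex.real_smul,
    ← Complex.ofReal_exp, gauss]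
  simp only [← Complex.ofReal_mul]
  congr 1
  have h7 : (2 * Real.pi) ^ ((m : ℝ) / 2) = (2 * Real.pi) ^ m * (2 * Real.pi) ^ (-(m : ℝ) / 2) := by
    rw [← Real.rpow_natCast, ← Real.rpow_add (by positivity)]
    congr 1
    ring
  have h8 : (A.det ^ (1 / 2 : ℝ))⁻¹ = A.det ^ (-(1 : ℝ) / 2) := by
    rw [← Real.rpow_neg hA.det_pos.le]
    congr 1
    ring
  rw [h7, h8]
  ring

lemma integral_Ioc_cexp_int (k : ℤ) :
    ∫ t in Set.Ioc (-Real.pi) Real.pi, Complex.exp (Complex.I * ((t * k : ℝ) : ℂ))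
      = if k = 0 then ((2 * Real.pi : ℝ) : ℂ) else 0 := by
  have hle : -Real.pi ≤ Real.pi := by linarith [Real.pi_pos]
  rw [← intervalIntegral.integral_of_le hle]
  split_ifs with hk
  · subst hk
    simp
    ring
  · have hc : (Complex.I * k : ℂ) ≠ 0 := mul_ne_zero Complex.I_ne_zero (by exact_mod_cast hk)
    have h1 : ∀ t : ℝ, Complex.I * ((t * k : ℝ) : ℂ) = (Complex.I * k) * t := fun t => by
      push_cast; ring
    simp_rw [h1]
    rw [integral_exp_mul_complex hc, div_eq_zero_iff]
    left
    rw [sub_eq_zero]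
    have h2 : Complex.I * k * (Real.pi : ℝ) = Complex.I * k * ((-Real.pi : ℝ) : ℂ)
        + k * (2 * Real.pi * Complex.I) := by push_cast; ring
    rw [h2, Complex.exp_add, Complex.exp_int_mul_two_pi_mul_I, mul_one]

/-- Orthogonality of characters on the fundamental cube. -/
lemma integral_cube_cexp_int {m : ℕ} (k : Fin m → ℤ) :
    ∫ v in Set.univ.pi fun _ : Fin m => Set.Ioc (-Real.pi) Real.pi,
        Complex.exp (Complex.I * ((∑ i, v i * (k i : ℝ) : ℝ) : ℂ))
      = if k = 0 then (((2 * Real.pi) ^ m : ℝ) : ℂ) else 0 := by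
  have h1 : ∀ v : Fin m → ℝ, Complex.exp (Complex.I * ((∑ i, v i * (k i : ℝ) : ℝ) : ℂ))
      = ∏ i, Complex.exp (Complex.I * ((v i * (k i : ℝ) : ℝ) : ℂ)) := fun v => by
    rw [← Complex.exp_sum, Complex.ofReal_sum, Finset.mul_sum]
  simp_rw [h1]
  rw [volume_pi, Measure.restrict_pi_pi, integral_fintype_prod_eq_prod
    (f := fun i t => Complex.exp (Complex.I * ((t * (k i : ℝ) : ℝ) : ℂ)))]
  simp_rw [integral_Ioc_cexp_int]
  split_ifs with hk
  · simp [hk]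
  · obtain ⟨i, hi⟩ := Function.ne_iff.1 hk
    exact Finset.prod_eq_zero (Finset.mem_univ i) (by simpa using hi)

end GaussianFourier

section SquareSummable

variable {α ι : Type*} {μ : α → ℝ}

lemma summable_mul_mul_of_sq (hμ : ∀ s, 0 ≤ μ s) {f g : α → ℝ}
    (hf : Summable fun s => μ s * f s ^ 2)
    (hg : Summable fun s => μ s * g s ^ 2) : Summable fun s => μ s * (f s * g s) := by
  refine Summable.of_norm_bounded (hf.add hg) fun s => ?_
  rw [norm_mul, Real.norm_of_nonneg (hμ s), ← mul_add]
  refine mul_le_mul_of_nonneg_left ?_ (hμ s)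
  rw [Real.norm_eq_abs, abs_le]
  constructor <;> nlinarith [sq_nonneg (f s + g s), sq_nonneg (f s - g s), sq_nonneg (f s),
    sq_nonneg (g s)]

lemma summable_mul_sq_add (hμ : ∀ s, 0 ≤ μ s) {f g : α → ℝ} (hf : Summable fun s => μ s * f s ^ 2)
    (hg : Summable fun s => μ s * g s ^ 2) : Summable fun s => μ s * (f s + g s) ^ 2 := by
  refine ((hf.add hg).add ((summable_mul_mul_of_sq hμ hf hg).mul_left 2)).congr fun s => ?_
  ring

lemma summable_mul_sq_const_mul {f : α → ℝ} (hf : Summable fun s => μ s * f s ^ 2) (c : ℝ) :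
    Summable fun s => μ s * (c * f s) ^ 2 := by
  refine (hf.mul_left (c ^ 2)).congr fun s => ?_
  ring

lemma summable_mul_sq_sum (hμ : ∀ s, 0 ≤ μ s) (t : Finset ι) {f : ι → α → ℝ}
    (hf : ∀ i ∈ t, Summable fun s => μ s * f i s ^ 2) :
    Summable fun s => μ s * (∑ i ∈ t, f i s) ^ 2 := by
  induction t using Finset.induction_on with
  | empty => simp [summable_zero]
  | insert i t hi ih =>
    simp only [Finset.sum_insert hi]
    exact summable_mul_sq_add hμ (hf i (by simp)) (ih fun j hj => hf j (by simp [hj]))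

lemma summable_mul_sq_of_bounded (hμ : IsProb μ) {f : α → ℝ} {C : ℝ} (hf : ∀ s, |f s| ≤ C) :
    Summable fun s => μ s * f s ^ 2 := by
  refine Summable.of_nonneg_of_le (fun s => mul_nonneg (hμ.1 s) (sq_nonneg _)) (fun s => ?_)
    (hμ.2.summable.mul_right (C ^ 2))
  refine mul_le_mul_of_nonneg_left ?_ (hμ.1 s)
  rw [← sq_abs]
  exact pow_le_pow_left₀ (abs_nonneg _) (hf s) 2

lemma summable_mul_of_sq (hμ : IsProb μ) {f : α → ℝ} (hf : Summable fun s => μ s * f s ^ 2) :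
    Summable fun s => μ s * f s := by
  simpa using summable_mul_mul_of_sq hμ.1 hf (summable_mul_sq_of_bounded hμ (f := fun _ => 1)
    (C := 1) (by simp))

end SquareSummable

section Corrector

variable {Γ : Type*} [Group Γ] {Λ : Subgroup Γ} {m : ℕ}
variable (ψ : Λ ≃* Multiplicative (Fin m → ℤ)) (R : RepSystem Λ) (μ : Γ → ℝ)

/-- The coordinates of the displacement, corrected by the coboundary of `g` and recentred by the
drift. -/
noncomputable def centered (g : Fin m → R.Δ → ℝ) (i : Fin m) (x : R.Δ) (s : Γ) : ℝ :=
  (cocycle ψ R x s i : ℝ) - drift ψ R μ i - g i (R.act x s) + g i x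

/-- The linear combination of the corrected displacements with coefficients `v`. -/
noncomputable def centeredForm (g : Fin m → R.Δ → ℝ) (v : Fin m → ℝ) (x : R.Δ) (s : Γ) : ℝ :=
  ∑ i, v i * centered ψ R μ g i x s

/-- The limiting covariance matrix. -/
noncomputable def covMat (g : Fin m → R.Δ → ℝ) : Matrix (Fin m) (Fin m) ℝ :=
  Matrix.of fun i j => (Fintype.card R.Δ : ℝ)⁻¹ *
    ∑ x : R.Δ, ∑' s, μ s * (centered ψ R μ g i x s * centered ψ R μ g j x s)

/-- `g` solves the Poisson equations that make the corrected displacements centred. -/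
def IsCorrector (g : Fin m → R.Δ → ℝ) : Prop :=
  ∀ i x, ∑' s, μ s * centered ψ R μ g i x s = 0

variable {ψ R μ}

lemma centeredForm_eq (g : Fin m → R.Δ → ℝ) (v : Fin m → ℝ) (x : R.Δ) (s : Γ) :
    centeredForm ψ R μ g v x s = vhat ψ R v x s - v ⬝ᵥ drift ψ R μ
      - (∑ i, v i * g i (R.act x s)) + ∑ i, v i * g i x := by
  simp only [centeredForm, centered, vhat, dotProduct, ← Finset.sum_sub_distrib,
    ← Finset.sum_add_distrib]
  exact Finset.sum_congr rfl fun i _ => by ring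

lemma summable_mul_cocycle (hμ : IsProb μ) (hmom : FinSecondMoment μ) (x : R.Δ) (i : Fin m) :
    Summable fun s => μ s * (cocycle ψ R x s i : ℝ) :=
  summable_mul_of_sq hμ (summable_mul_cocycle_sq ψ R hμ hmom x i)

lemma summable_mul_act (hμ : IsProb μ) (f : R.Δ → ℝ) (x : R.Δ) :
    Summable fun s => μ s * f (R.act x s) := by
  obtain ⟨y, hy⟩ := Finite.exists_max fun y => |f y|
  exact summable_mul_of_sq hμ (summable_mul_sq_of_bounded hμ fun s => hy _)

lemma exists_isCorrector (hN : Λ.Normal) (hμ : IsProb μ) (hnd : Nondeg μ) (hap : Aperiodic μ)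
    (hmom : FinSecondMoment μ) : ∃ g, IsCorrector ψ R μ g := by
  obtain ⟨N, c, hc0, hc⟩ := exists_transMat_pow_ge (R := R) ψ hμ hnd hap
  have h1 : ∀ i, ∃ f : R.Δ → ℝ, f - transMat R μ *ᵥ f
      = fun x : R.Δ => drift ψ R μ i - ∑' s, μ s * (cocycle ψ R x s i : ℝ) := fun i => by
    refine exists_poisson (transMat_mulVec_one hμ) (one_vecMul_transMat hμ) hc0 hc ?_
    have hd : (Fintype.card R.Δ : ℝ) ≠ 0 := by exact_mod_cast Fintype.card_ne_zero
    rw [Finset.sum_sub_distrib, drift, ← R.card_eq_index hN, ← Finset.sum_coe_sort R.Δ]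
    simp only [Finset.sum_const, Finset.card_univ, nsmul_eq_mul]
    rw [mul_inv_cancel_left₀ hd, sub_self]
  choose g hg using h1
  refine ⟨g, fun i x => ?_⟩
  have h2 := congrFun (hg i) x
  rw [Pi.sub_apply, transMat_mulVec hμ] at h2
  have hs1 := summable_mul_cocycle (ψ := ψ) hμ hmom x i
  have hs2 := summable_mul_act hμ (g i) x
  have h3 : ∀ s, μ s * centered ψ R μ g i x s = μ s * (cocycle ψ R x s i : ℝ)
      - μ s * g i (R.act x s) + μ s * (g i x - drift ψ R μ i) := fun s => by
    rw [centered]; ring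
  simp_rw [h3]
  rw [(hs1.sub hs2).tsum_add (hμ.2.summable.mul_right _), hs1.tsum_sub hs2, tsum_mul_right,
    hμ.2.tsum_eq]
  linarith

lemma summable_mul_centered_sq (hμ : IsProb μ) (hmom : FinSecondMoment μ) (g : Fin m → R.Δ → ℝ)
    (i : Fin m) (x : R.Δ) : Summable fun s => μ s * centered ψ R μ g i x s ^ 2 := by
  obtain ⟨y, hy⟩ := Finite.exists_max fun y => |g i y|
  have h := summable_mul_sq_add hμ.1 (summable_mul_cocycle_sq ψ R hμ hmom x i)
    (summable_mul_sq_of_bounded hμ (f := fun s => g i x - drift ψ R μ i - g i (R.act x s))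
      (C := |g i x - drift ψ R μ i| + |g i y|) fun s =>
      (abs_sub _ _).trans (add_le_add le_rfl (hy _)))
  refine h.congr fun s => ?_
  rw [centered]
  ring

lemma summable_mul_centeredForm_sq (hμ : IsProb μ) (hmom : FinSecondMoment μ)
    (g : Fin m → R.Δ → ℝ) (v : Fin m → ℝ) (x : R.Δ) :
    Summable fun s => μ s * centeredForm ψ R μ g v x s ^ 2 :=
  summable_mul_sq_sum hμ.1 _ fun i _ =>
    summable_mul_sq_const_mul (summable_mul_centered_sq hμ hmom g i x) (v i)

lemma tsum_mul_centeredForm (hμ : IsProb μ) (hmom : FinSecondMoment μ) {g : Fin m → R.Δ → ℝ}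
    (hg : IsCorrector ψ R μ g) (v : Fin m → ℝ) (x : R.Δ) :
    ∑' s, μ s * centeredForm ψ R μ g v x s = 0 := by
  have hs : ∀ i, Summable fun s => v i * (μ s * centered ψ R μ g i x s) := fun i =>
    (summable_mul_of_sq hμ (summable_mul_centered_sq hμ hmom g i x)).mul_left _
  have h : ∀ s, μ s * centeredForm ψ R μ g v x s
      = ∑ i, v i * (μ s * centered ψ R μ g i x s) := fun s => by
    rw [centeredForm, Finset.mul_sum]
    exact Finset.sum_congr rfl fun i _ => by ring
  simp_rw [h]
  rw [Summable.tsum_finsetSum fun i _ => hs i]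
  refine Finset.sum_eq_zero fun i _ => ?_
  rw [tsum_mul_left, hg i x, mul_zero]

lemma dotProduct_covMat_mulVec (hμ : IsProb μ) (hmom : FinSecondMoment μ) (g : Fin m → R.Δ → ℝ)
    (v w : Fin m → ℝ) : v ⬝ᵥ covMat ψ R μ g *ᵥ w = (Fintype.card R.Δ : ℝ)⁻¹ *
      ∑ x : R.Δ, ∑' s, μ s * (centeredForm ψ R μ g v x s * centeredForm ψ R μ g w x s) := by
  have hs : ∀ x i j, Summable fun s => μ s * (centered ψ R μ g i x s * centered ψ R μ g j x s) :=
    fun x i j => summable_mul_mul_of_sq hμ.1 (summable_mul_centered_sq hμ hmom g i x)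
      (summable_mul_centered_sq hμ hmom g j x)
  have h : ∀ x, ∑' s, μ s * (centeredForm ψ R μ g v x s * centeredForm ψ R μ g w x s)
      = ∑ i, ∑ j, v i * w j * ∑' s, μ s * (centered ψ R μ g i x s * centered ψ R μ g j x s) := by
    intro x
    have h1 : ∀ s, μ s * (centeredForm ψ R μ g v x s * centeredForm ψ R μ g w x s)
        = ∑ i, ∑ j, v i * w j * (μ s * (centered ψ R μ g i x s * centered ψ R μ g j x s)) := by
      intro s
      rw [centeredForm, centeredForm, Finset.sum_mul_sum, Finset.mul_sum]
      refine Finset.sum_congr rfl fun i _ => ?_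
      rw [Finset.mul_sum]
      exact Finset.sum_congr rfl fun j _ => by ring
    simp_rw [h1]
    rw [Summable.tsum_finsetSum fun i _ => summable_sum fun j _ => (hs x i j).mul_left _]
    refine Finset.sum_congr rfl fun i _ => ?_
    rw [Summable.tsum_finsetSum fun j _ => (hs x i j).mul_left _]
    exact Finset.sum_congr rfl fun j _ => tsum_mul_left
  simp_rw [h]
  rw [Finset.sum_comm, Finset.mul_sum]
  simp only [dotProduct, mulVec, covMat, Matrix.of_apply]
  refine Finset.sum_congr rfl fun i _ => ?_
  rw [Finset.sum_comm, Finset.mul_sum, Finset.mul_sum]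
  refine Finset.sum_congr rfl fun j _ => ?_
  rw [← Finset.mul_sum]
  ring

lemma covMat_isSymm (g : Fin m → R.Δ → ℝ) : (covMat ψ R μ g).IsSymm := by
  ext i j
  simp only [covMat, transpose_apply, Matrix.of_apply]
  simp_rw [mul_comm (centered ψ R μ g j _ _)]

/-- The harmonic part of `vhat` is determined by the correctors. -/
lemma harmonic_part_eq (hμ : IsProb μ) (hnd : Nondeg μ) (hap : Aperiodic μ)
    (hmom : FinSecondMoment μ) {g : Fin m → R.Δ → ℝ} (hg : IsCorrector ψ R μ g) {v : Fin m → ℝ}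
    {u : Γ → Γ → ℝ} {f : Γ → ℝ} (hu : IsHarmDecomp R μ (vhat ψ R v) u f) (x : R.Δ) (s : Γ) :
    u x s = centeredForm ψ R μ g v x s + chi R μ u := by
  obtain ⟨N, c, hc0, hc⟩ := exists_transMat_pow_ge (R := R) ψ hμ hnd hap
  set G : R.Δ → ℝ := fun x => ∑ i, v i * g i x with hG
  set h : R.Δ → ℝ := fun x => f x - G x with hh
  have hd : (Fintype.card R.Δ : ℝ) ≠ 0 := by exact_mod_cast Fintype.card_ne_zero
  have hcf : ∀ (x : R.Δ) s, u x s = centeredForm ψ R μ g v x s + v ⬝ᵥ drift ψ R μ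
      - h (R.act x s) + h x := fun x s => by
    have h1 := hu.2.2 x x.2 s
    rw [centeredForm_eq, h1, dd]
    simp only [hh, hG, RepSystem.act]
    ring
  have hpois : ∀ x, h x - (transMat R μ *ᵥ h) x = chi R μ u - v ⬝ᵥ drift ψ R μ := fun x => by
    have h1 := hu.2.1.2 x x.2
    have hs1 := summable_mul_of_sq hμ (summable_mul_centeredForm_sq (ψ := ψ) hμ hmom g v x)
    have hs2 := summable_mul_act hμ h x
    have h2 : ∀ s, μ s * u x s = μ s * centeredForm ψ R μ g v x s - μ s * h (R.act x s)
        + μ s * (v ⬝ᵥ drift ψ R μ + h x) := fun s => by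
      rw [hcf]; ring
    simp_rw [h2] at h1
    rw [(hs1.sub hs2).tsum_add (hμ.2.summable.mul_right _), hs1.tsum_sub hs2, tsum_mul_right,
      hμ.2.tsum_eq, tsum_mul_centeredForm hμ hmom hg, ← transMat_mulVec hμ] at h1
    linarith
  have hchi : chi R μ u = v ⬝ᵥ drift ψ R μ := by
    have h1 := Finset.sum_congr rfl fun x (_ : x ∈ Finset.univ) => hpois x
    rw [Finset.sum_sub_distrib, sum_mulVec_of_vecMul_one (one_vecMul_transMat hμ), sub_self,
      Finset.sum_const, nsmul_eq_mul, Finset.card_univ] at h1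
    have := (mul_eq_zero.1 h1.symm).resolve_left hd
    linarith
  set a : ℝ := (Fintype.card R.Δ : ℝ)⁻¹ * ∑ x, h x with ha
  have hconst : h - a • 1 = 0 := by
    refine eq_zero_of_mulVec_eq (transMat_mulVec_one hμ) hc0 hc ?_ ?_
    · simp only [Pi.sub_apply, Pi.smul_apply, Pi.one_apply, smul_eq_mul, mul_one,
        Finset.sum_sub_distrib, Finset.sum_const, Finset.card_univ, nsmul_eq_mul]
      rw [ha, mul_inv_cancel_left₀ hd, sub_self]
    · rw [mulVec_sub, mulVec_smul, transMat_mulVec_one hμ]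
      congr 1
      ext x
      have := hpois x
      linarith
  have hx : ∀ x, h x = a := fun x => by
    have := congrFun hconst x
    simp only [Pi.sub_apply, Pi.smul_apply, Pi.one_apply, smul_eq_mul, mul_one, Pi.zero_apply]
      at this
    linarith
  rw [hcf, hx, hx, hchi]
  ring

lemma cov_eq_dotProduct_covMat (hN : Λ.Normal) (hμ : IsProb μ) (hnd : Nondeg μ)
    (hap : Aperiodic μ) (hmom : FinSecondMoment μ) {g : Fin m → R.Δ → ℝ}
    (hg : IsCorrector ψ R μ g) {v w : Fin m → ℝ} {u₁ u₂ : Γ → Γ → ℝ} {f₁ f₂ : Γ → ℝ}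
    (hu₁ : IsHarmDecomp R μ (vhat ψ R v) u₁ f₁) (hu₂ : IsHarmDecomp R μ (vhat ψ R w) u₂ f₂) :
    v ⬝ᵥ covMat ψ R μ g *ᵥ w = cov R μ u₁ u₂ := by
  have hd : (Fintype.card R.Δ : ℝ) ≠ 0 := by exact_mod_cast Fintype.card_ne_zero
  rw [dotProduct_covMat_mulVec hμ hmom, cov, ← R.card_eq_index hN, ← Finset.sum_coe_sort R.Δ]
  have h : ∀ x : R.Δ, ∑' s, μ s / (Fintype.card R.Δ : ℝ) * (u₁ x s * u₂ x s)
      = (Fintype.card R.Δ : ℝ)⁻¹ * ∑' s, μ s * (centeredForm ψ R μ g v x s *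
        centeredForm ψ R μ g w x s) + (Fintype.card R.Δ : ℝ)⁻¹ * (chi R μ u₁ * chi R μ u₂) := by
    intro x
    have hs1 := summable_mul_centeredForm_sq (ψ := ψ) hμ hmom g v x
    have hs2 := summable_mul_centeredForm_sq (ψ := ψ) hμ hmom g w x
    have hs3 := summable_mul_mul_of_sq hμ.1 hs1 hs2
    have hs4 := (summable_mul_of_sq hμ hs1).mul_right (chi R μ u₂)
    have hs5 := (summable_mul_of_sq hμ hs2).mul_right (chi R μ u₁)
    have h1 : ∀ s, μ s / (Fintype.card R.Δ : ℝ) * (u₁ x s * u₂ x s)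
        = (Fintype.card R.Δ : ℝ)⁻¹ * (μ s * (centeredForm ψ R μ g v x s *
          centeredForm ψ R μ g w x s) + μ s * centeredForm ψ R μ g v x s * chi R μ u₂
          + μ s * centeredForm ψ R μ g w x s * chi R μ u₁
          + μ s * (chi R μ u₁ * chi R μ u₂)) := fun s => by
      rw [harmonic_part_eq hμ hnd hap hmom hg hu₁, harmonic_part_eq hμ hnd hap hmom hg hu₂]
      ring
    simp_rw [h1]
    rw [tsum_mul_left, ((hs3.add hs4).add hs5).tsum_add (hμ.2.summable.mul_right _),
      (hs3.add hs4).tsum_add hs5, hs3.tsum_add hs4, tsum_mul_right, tsum_mul_right, tsum_mul_right,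
      hμ.2.tsum_eq, tsum_mul_centeredForm hμ hmom hg, tsum_mul_centeredForm hμ hmom hg]
    ring
  simp_rw [h]
  rw [Finset.sum_add_distrib, ← Finset.mul_sum, Finset.sum_const, nsmul_eq_mul, Finset.card_univ,
    mul_inv_cancel_left₀ hd]
  ring

lemma covMat_posDef (hμ : IsProb μ) (hnd : Nondeg μ)
    (hap : Aperiodic μ) (hmom : FinSecondMoment μ) (g : Fin m → R.Δ → ℝ) :
    (covMat ψ R μ g).PosDef := by
  have hd : (0 : ℝ) < Fintype.card R.Δ := by exact_mod_cast Fintype.card_pos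
  refine PosDef.of_dotProduct_mulVec_pos ?_ fun v hv => ?_
  · rw [IsHermitian, conjTranspose_eq_transpose_of_trivial]
    exact covMat_isSymm g
  rw [star_trivial, dotProduct_covMat_mulVec hμ hmom]
  have hnn : ∀ x s, 0 ≤ μ s * (centeredForm ψ R μ g v x s * centeredForm ψ R μ g v x s) :=
    fun x s => mul_nonneg (hμ.1 s) (mul_self_nonneg _)
  refine (mul_nonneg (inv_nonneg.2 hd.le) (Finset.sum_nonneg fun x _ =>
    tsum_nonneg (hnn x))).lt_of_ne' fun h0 => hv ?_
  have h1 := (mul_eq_zero.1 h0).resolve_left (inv_ne_zero hd.ne')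
  rw [Finset.sum_eq_zero_iff_of_nonneg fun x _ => tsum_nonneg (hnn x)] at h1
  have hs : ∀ x, Summable fun s =>
      μ s * (centeredForm ψ R μ g v x s * centeredForm ψ R μ g v x s) :=
    fun x => summable_mul_mul_of_sq hμ.1 (summable_mul_centeredForm_sq hμ hmom g v x)
      (summable_mul_centeredForm_sq hμ hmom g v x)
  have h2 : ∀ x s, 0 < μ s → centeredForm ψ R μ g v x s = 0 := fun x s hs0 => by
    have h3 := ((hs x).hasSum_iff.2 (h1 x (Finset.mem_univ x)))
    have h4 := congrFun ((hasSum_zero_iff_of_nonneg (hnn x)).1 h3) s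
    simpa [hs0.ne'] using h4
  set G : R.Δ → ℝ := fun x => ∑ i, v i * g i x with hG
  set z : ℝ := v ⬝ᵥ drift ψ R μ with hz
  have h5 : ∀ n s, 0 < convPow μ n s → ∀ x : R.Δ, vhat ψ R v x s = n * z + G (R.act x s) - G x := by
    intro n
    induction n with
    | zero =>
      intro s hs0 x
      have hs1 : s = 1 := by
        by_contra hs1
        simp [convPow, hs1] at hs0
      rw [hs1, vhat_one, R.act_one]
      simp
    | succ n ih =>
      intro s hs0 x
      obtain ⟨t, ht⟩ : ∃ t, convPow μ n t * μ (t⁻¹ * s) ≠ 0 := by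
        by_contra! hcon
        simp [convPow, conv, hcon] at hs0
      have ht1 : 0 < convPow μ n t :=
        (convPow_nonneg hμ.1 n t).lt_of_ne' (left_ne_zero_of_mul ht)
      have ht2 : 0 < μ (t⁻¹ * s) := (hμ.1 _).lt_of_ne' (right_ne_zero_of_mul ht)
      have h6 := h2 (R.act x t) _ ht2
      rw [centeredForm_eq, ← R.act_mul, mul_inv_cancel_left] at h6
      have h7 := vhat_mul ψ R v x t (t⁻¹ * s)
      rw [mul_inv_cancel_left] at h7
      rw [h7, ih t ht1 x]
      push_cast
      simp only [hG, hz] at *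
      linarith
  have hz0 : z = 0 := by
    obtain ⟨N, hN⟩ := hap
    have h6 := h5 N 1 (hN N le_rfl) ⟨1, R.one_mem⟩
    have h7 := h5 (N + 1) 1 (hN (N + 1) (Nat.le_succ N)) ⟨1, R.one_mem⟩
    rw [vhat_one, R.act_one] at h6 h7
    push_cast at h7
    linarith
  funext i
  set x : R.Δ := ⟨1, R.one_mem⟩
  obtain ⟨n, hn⟩ := (eventually_convPow_pos hμ hnd hap
    ((x : Γ)⁻¹ * ψ.symm (Multiplicative.ofAdd (Pi.single i 1)) * x)).exists
  have h6 := h5 n _ hn x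
  rw [act_conj, hz0, vhat, cocycle_conj] at h6
  simpa [Pi.single_apply] using h6

end Corrector

section PointwiseLimit

open Topology

attribute [local instance] Matrix.linftyOpNormedRing Matrix.linftyOpNormedAlgebra

lemma norm_cexp_sub_one_sub_le (θ : ℝ) :
    ‖Complex.exp (Complex.I * θ) - 1 - Complex.I * θ‖ ≤ 2 * θ ^ 2 := by
  have hn : ‖Complex.I * θ‖ = |θ| := by simp
  rcases le_or_gt |θ| 1 with h | h
  · have := Complex.norm_exp_sub_one_sub_id_le (x := Complex.I * θ) (hn.trans_le h)
    rw [hn, sq_abs] at this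
    linarith [sq_nonneg θ]
  · have h1 : ‖Complex.exp (Complex.I * θ) - 1‖ ≤ |θ| := Real.norm_exp_I_mul_ofReal_sub_one_le
    refine (norm_sub_le _ _).trans ?_
    rw [hn, ← sq_abs]
    nlinarith

lemma tendsto_mul_cexp_sub (u : ℝ) :
    Tendsto (fun n : ℕ => (n : ℂ) * (Complex.exp (Complex.I * ((√n)⁻¹ * u : ℝ)) - 1
      - Complex.I * ((√n)⁻¹ * u : ℝ))) atTop (𝓝 ((-(u ^ 2 / 2) : ℝ) : ℂ)) := by
  have hz : Tendsto (fun n : ℕ => (√(n : ℝ))⁻¹) atTop (𝓝 0) :=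
    tendsto_inv_atTop_zero.comp (Real.tendsto_sqrt_atTop.comp tendsto_natCast_atTop_atTop)
  have hz1 : Tendsto (fun n : ℕ => |(√(n : ℝ))⁻¹ * u|) atTop (𝓝 0) := by
    simpa using (hz.mul_const u).abs
  have hz2 : Tendsto (fun n : ℕ => (√(n : ℝ))⁻¹ * |u| ^ 3) atTop (𝓝 0) := by
    simpa using hz.mul_const (|u| ^ 3)
  rw [tendsto_iff_norm_sub_tendsto_zero]
  refine squeeze_zero' (Eventually.of_forall fun _ => norm_nonneg _) ?_ hz2
  filter_upwards [hz1.eventually (ge_mem_nhds one_pos), eventually_gt_atTop 0] with n hn hn0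
  have hn0' : (0 : ℝ) < n := by exact_mod_cast hn0
  set h : ℝ := (√(n : ℝ))⁻¹ with hh
  have hh0 : 0 ≤ h := by positivity
  have hh2 : (n : ℝ) * h ^ 2 = 1 := by
    rw [hh, inv_pow, Real.sq_sqrt hn0'.le, mul_inv_cancel₀ hn0'.ne']
  have hnorm : ‖Complex.I * ((h * u : ℝ) : ℂ)‖ = |h * u| := by
    rw [norm_mul, Complex.norm_I, one_mul, Complex.norm_real, Real.norm_eq_abs]
  have hb := Complex.exp_bound (x := Complex.I * ((h * u : ℝ) : ℂ)) (hnorm.trans_le hn)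
    (n := 3) (by norm_num)
  have hsum : ∑ k ∈ Finset.range 3, (Complex.I * ((h * u : ℝ) : ℂ)) ^ k / (k.factorial : ℂ)
      = 1 + Complex.I * ((h * u : ℝ) : ℂ) - ((h * u : ℝ) : ℂ) ^ 2 / 2 := by
    simp [Finset.sum_range_succ, Nat.factorial, mul_pow]
    ring
  rw [hsum, hnorm] at hb
  have hh2c : (n : ℂ) * (h : ℂ) ^ 2 = 1 := by exact_mod_cast hh2
  have hid : (n : ℂ) * (Complex.exp (Complex.I * ((h * u : ℝ) : ℂ)) - 1
      - Complex.I * ((h * u : ℝ) : ℂ)) - ((-(u ^ 2 / 2) : ℝ) : ℂ)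
      = n * (Complex.exp (Complex.I * ((h * u : ℝ) : ℂ))
        - (1 + Complex.I * ((h * u : ℝ) : ℂ) - ((h * u : ℝ) : ℂ) ^ 2 / 2)) := by
    push_cast
    linear_combination (-(u : ℂ) ^ 2 / 2) * hh2c
  rw [hid, norm_mul, Complex.norm_natCast]
  refine (mul_le_mul_of_nonneg_left hb hn0'.le).trans ?_
  rw [abs_mul, abs_of_nonneg hh0, mul_pow]
  have hc : ((Nat.succ 3 : ℕ) : ℝ) * (((Nat.factorial 3 : ℕ) : ℝ) * ((3 : ℕ) : ℝ))⁻¹ ≤ 1 := by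
    norm_num [Nat.factorial]
  calc (n : ℝ) * (h ^ 3 * |u| ^ 3 * (((Nat.succ 3 : ℕ) : ℝ)
        * (((Nat.factorial 3 : ℕ) : ℝ) * ((3 : ℕ) : ℝ))⁻¹))
      ≤ (n : ℝ) * (h ^ 3 * |u| ^ 3 * 1) := by gcongr
    _ = (n * h ^ 2) * (h * |u| ^ 3) := by ring
    _ = h * |u| ^ 3 := by rw [hh2, one_mul]

/-- Second order expansion of the characteristic function of a centred variable. -/
lemma tendsto_mul_charFun_sub_one {α : Type*} {μ : α → ℝ} (hμ : IsProb μ) {u : α → ℝ}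
    (hu : Summable fun s => μ s * u s ^ 2) (hu0 : ∑' s, μ s * u s = 0) :
    Tendsto (fun n : ℕ => (n : ℂ) * (∑' s, μ s • Complex.exp (Complex.I * ((√n)⁻¹ * u s : ℝ)) - 1))
      atTop (𝓝 ((-(1 / 2 * ∑' s, μ s * u s ^ 2) : ℝ) : ℂ)) := by
  have h1 : ∀ n : ℕ, (n : ℂ) * (∑' s, μ s • Complex.exp (Complex.I * ((√n)⁻¹ * u s : ℝ)) - 1)
      = ∑' s, μ s • ((n : ℂ) * (Complex.exp (Complex.I * ((√n)⁻¹ * u s : ℝ)) - 1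
        - Complex.I * ((√n)⁻¹ * u s : ℝ))) := by
    intro n
    have hs1 : Summable fun s => μ s • Complex.exp (Complex.I * ((√n)⁻¹ * u s : ℝ)) :=
      Summable.of_norm_bounded hμ.2.summable fun s =>
        norm_smul_le_of_norm_le_one (hμ.1 s) (norm_cexp_I_mul _).le
    have hs2 : HasSum (fun s => ((μ s : ℝ) : ℂ)) 1 := by
      simpa using Complex.hasSum_ofReal (f := μ) |>.2 hμ.2
    have hs3 : HasSum (fun s => ((μ s * u s : ℝ) : ℂ)) 0 := by
      have := (summable_mul_of_sq hμ hu).hasSum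
      rw [hu0] at this
      simpa using (Complex.hasSum_ofReal (f := fun s => μ s * u s)).2 this
    have h2 := ((hs1.hasSum.sub hs2).sub (hs3.mul_left (Complex.I * (((√n)⁻¹ : ℝ) : ℂ)))).mul_left
      (n : ℂ)
    rw [mul_zero, sub_zero] at h2
    rw [← h2.tsum_eq]
    refine tsum_congr fun s => ?_
    simp only [Complex.real_smul]
    push_cast
    ring
  simp_rw [h1]
  have h3 : ((-(1 / 2 * ∑' s, μ s * u s ^ 2) : ℝ) : ℂ)
      = ∑' s, μ s • ((-(u s ^ 2 / 2) : ℝ) : ℂ) := by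
    rw [← tsum_mul_left, ← tsum_neg, Complex.ofReal_tsum]
    refine tsum_congr fun s => ?_
    rw [Complex.real_smul]
    push_cast
    ring
  rw [h3]
  refine tendsto_tsum_of_dominated_convergence (bound := fun s => 2 * (μ s * u s ^ 2))
    (hu.mul_left 2) (fun s => (tendsto_mul_cexp_sub (u s)).const_smul (μ s)) ?_
  refine Eventually.of_forall fun n s => ?_
  rw [norm_smul, Real.norm_of_nonneg (hμ.1 s), norm_mul, Complex.norm_natCast]
  have h4 := norm_cexp_sub_one_sub_le ((√n)⁻¹ * u s)
  have h5 : (n : ℝ) * (2 * ((√n)⁻¹ * u s) ^ 2) ≤ 2 * u s ^ 2 := by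
    rw [mul_pow, inv_pow, Real.sq_sqrt n.cast_nonneg]
    have : (n : ℝ) * (n : ℝ)⁻¹ ≤ 1 := mul_inv_le_one
    nlinarith [sq_nonneg (u s)]
  have h6 := mul_le_mul_of_nonneg_left ((mul_le_mul_of_nonneg_left h4 n.cast_nonneg).trans h5)
    (hμ.1 s)
  linarith

variable {Γ : Type*} [Group Γ] {Λ : Subgroup Γ} {m : ℕ}
variable {ψ : Λ ≃* Multiplicative (Fin m → ℤ)} {R : RepSystem Λ} {μ : Γ → ℝ}

lemma tendsto_fourierOp_pow (hμ : IsProb μ) (hnd : Nondeg μ) (hap : Aperiodic μ)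
    (hmom : FinSecondMoment μ) {g : Fin m → R.Δ → ℝ} (hg : IsCorrector ψ R μ g)
    (t : Fin m → ℝ) (x y : R.Δ) :
    Tendsto (fun n : ℕ => Complex.exp (-(Complex.I * ((√n)⁻¹ * (t ⬝ᵥ drift ψ R μ) : ℝ))) ^ n
        * (fourierOp ψ R μ ((√n)⁻¹ • t) ^ n) x y) atTop
      (𝓝 (((Fintype.card R.Δ : ℝ)⁻¹ * Real.exp (-(t ⬝ᵥ covMat ψ R μ g *ᵥ t / 2)) : ℝ) : ℂ)) := by
  obtain ⟨N, c, hc0, hc⟩ := exists_transMat_pow_ge (R := R) ψ hμ hnd hap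
  have hz : Tendsto (fun n : ℕ => (√(n : ℝ))⁻¹) atTop (𝓝 0) :=
    tendsto_inv_atTop_zero.comp (Real.tendsto_sqrt_atTop.comp tendsto_natCast_atTop_atTop)
  set z : ℝ := t ⬝ᵥ drift ψ R μ with hzdef
  set G : R.Δ → ℝ := fun x => ∑ i, t i * g i x with hG
  set ph : ℕ → ℂ := fun n => Complex.exp (-(Complex.I * ((√n)⁻¹ * z : ℝ))) with hph
  have hph1 : ∀ n, ‖ph n‖ = 1 := fun n => by
    have := norm_cexp_I_mul (-((√n)⁻¹ * z))
    rwa [Complex.ofReal_neg, mul_neg] at this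
  set M : ℕ → Matrix R.Δ R.Δ ℂ := fun n => ph n • fourierOp ψ R μ ((√n)⁻¹ • t) with hM
  set e : ℕ → R.Δ → ℂ := fun n x => Complex.exp (-(Complex.I * ((√n)⁻¹ * G x : ℝ))) with he
  have hlim : ∀ a : ℝ, Tendsto (fun n : ℕ => Complex.exp (-(Complex.I * ((√n)⁻¹ * a : ℝ))))
      atTop (𝓝 1) := fun a => by
    have hc : Continuous fun r : ℝ => Complex.exp (-(Complex.I * (r * a : ℝ))) := by fun_prop
    have h := (hc.tendsto 0).comp hz
    simp only [zero_mul, Complex.ofReal_zero, mul_zero, neg_zero, Complex.exp_zero] at h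
    exact h
  have hMe : ∀ n x, (M n *ᵥ e n) x = e n x *
      ∑' s, μ s • Complex.exp (Complex.I * ((√n)⁻¹ * centeredForm ψ R μ g t x s : ℝ)) := by
    intro n x
    simp only [hM]
    rw [smul_mulVec, Pi.smul_apply, fourierOp_mulVec hμ, smul_eq_mul, ← tsum_mul_left,
      ← tsum_mul_left]
    refine tsum_congr fun s => ?_
    simp only [Complex.real_smul, hph, he]
    rw [mul_left_comm, mul_left_comm (Complex.exp (-(Complex.I * ((√n)⁻¹ * G x : ℝ))))]
    congr 1
    rw [← Complex.exp_add, ← Complex.exp_add, ← Complex.exp_add]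
    congr 1
    have hv : vhat ψ R ((√(n : ℝ))⁻¹ • t) x s = (√(n : ℝ))⁻¹ * vhat ψ R t x s := by
      simp only [vhat, Finset.mul_sum, Pi.smul_apply, smul_eq_mul, mul_assoc]
    rw [hv, centeredForm_eq, ← hzdef]
    simp only [hG]
    push_cast
    ring
  have hkey := tendsto_pow_of_perturbation (P := transMat R μ) (M := M) (e := e)
    (b := fun x => 1 / 2 * ∑' s, μ s * centeredForm ψ R μ g t x s ^ 2)
    (a := t ⬝ᵥ covMat ψ R μ g *ᵥ t / 2)
    (transMat_mulVec_one hμ) (one_vecMul_transMat hμ) hc0 hc ?_ ?_ ?_ ?_ ?_ ?_ x y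
  · refine hkey.congr fun n => ?_
    simp only [hM]
    rw [smul_pow, Matrix.smul_apply, smul_eq_mul]
  · intro n
    simp only [hM]
    rw [norm_smul, hph1, one_mul]
    exact norm_fourierOp_le hμ _
  · have h1 : Tendsto (fun n : ℕ => (√(n : ℝ))⁻¹ • t) atTop (𝓝 0) := by
      simpa using hz.smul_const t
    have h2 := (hlim z).smul (((continuous_fourierOp (ψ := ψ) (R := R) hμ).tendsto 0).comp h1)
    rw [one_smul, fourierOp_zero ψ hμ] at h2
    exact h2
  · exact tendsto_pi_nhds.2 fun x => hlim (G x)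
  · have := (covMat_posDef (ψ := ψ) hμ hnd hap hmom g).posSemidef.dotProduct_mulVec_nonneg t
    rw [star_trivial] at this
    positivity
  · rw [dotProduct_covMat_mulVec hμ hmom, ← Finset.mul_sum]
    simp_rw [sq]
    ring
  · refine tendsto_pi_nhds.2 fun x => ?_
    have h1 := (hlim (G x)).mul (tendsto_mul_charFun_sub_one hμ
      (summable_mul_centeredForm_sq (ψ := ψ) hμ hmom g t x) (tsum_mul_centeredForm hμ hmom hg t x))
    rw [one_mul] at h1
    convert h1 using 1
    · ext n
      rw [Pi.smul_apply, Pi.sub_apply, hMe, smul_eq_mul]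
      simp only [he]
      ring
    · simp

end PointwiseLimit

section Inversion

open Topology

variable {Γ : Type*} [Group Γ] {Λ : Subgroup Γ} {m : ℕ}

/-- The half-open cube on which the characters of `ℤ^m` are orthogonal. -/
def cube (m : ℕ) : Set (Fin m → ℝ) := Set.univ.pi fun _ => Set.Ioc (-Real.pi) Real.pi

lemma measurableSet_cube : MeasurableSet (cube m) :=
  MeasurableSet.univ_pi fun _ => measurableSet_Ioc

lemma volume_cube_lt_top : volume (cube m) < ⊤ := by
  rw [cube, volume_pi_pi]
  exact ENNReal.prod_lt_top fun i _ => measure_Ioc_lt_top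

lemma cube_mem_nhds_zero : cube m ∈ 𝓝 (0 : Fin m → ℝ) :=
  set_pi_mem_nhds Set.finite_univ fun _ _ =>
    Ioc_mem_nhds (by simpa using Real.pi_pos) (by simpa using Real.pi_pos)

variable {ψ : Λ ≃* Multiplicative (Fin m → ℤ)} {R : RepSystem Λ}

/-- The coset representative of an element, as an element of the representative system. -/
def RepSystem.repΔ (R : RepSystem Λ) (γ : Γ) : R.Δ := ⟨R.rep γ, R.rep_mem γ⟩

lemma eq_of_rep_eq_of_Phi_eq {s γ : Γ} (h1 : R.rep s = R.rep γ) (h2 : Phi ψ R s = Phi ψ R γ) :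
    s = γ := by
  have h3 := congrArg Subtype.val (ψ.injective (Multiplicative.toAdd.injective h2))
  simp only [h1] at h3
  exact mul_right_cancel h3

/-- Fourier inversion on the group. -/
lemma integral_cube_fourierOp [Countable Γ] {ν : Γ → ℝ} (hν : IsProb ν) (γ : Γ) :
    ∫ v in cube m, Complex.exp (-(Complex.I * ((v ⬝ᵥ fun i => (Phi ψ R γ i : ℝ) : ℝ) : ℂ)))
        * fourierOp ψ R ν v ⟨1, R.one_mem⟩ (R.repΔ γ) = (((2 * Real.pi) ^ m * ν γ : ℝ) : ℂ) := by
  set E : (Fin m → ℝ) → ℂ := fun v =>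
    Complex.exp (-(Complex.I * ((v ⬝ᵥ fun i => (Phi ψ R γ i : ℝ) : ℝ) : ℂ))) with hE
  have hEn : ∀ v, ‖E v‖ = 1 := fun v => by
    have := norm_cexp_I_mul (-(v ⬝ᵥ fun i => (Phi ψ R γ i : ℝ)))
    rwa [Complex.ofReal_neg, mul_neg] at this
  have hEc : Continuous E := by simp only [hE, dotProduct]; fun_prop
  set F : Γ → (Fin m → ℝ) → ℂ := fun s v =>
    ν s • (E v * monomialRep ψ R v s ⟨1, R.one_mem⟩ (R.repΔ γ)) with hF
  have hrw : ∀ v, E v * fourierOp ψ R ν v ⟨1, R.one_mem⟩ (R.repΔ γ) = ∑' s, F s v := fun v => by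
    rw [fourierOp_apply hν, ← tsum_mul_left]
    exact tsum_congr fun s => mul_smul_comm _ _ _
  have hact : ∀ s, R.act ⟨1, R.one_mem⟩ s = R.repΔ γ ↔ R.rep s = R.rep γ := fun s => by
    simp [RepSystem.act, RepSystem.repΔ, Subtype.ext_iff]
  have hcoc : ∀ s, cocycle ψ R 1 s = Phi ψ R s := fun s => by simp [cocycle, Phi]
  have hFc : ∀ s, Continuous (F s) := fun s => by
    simp only [hF, monomialRep, Matrix.of_apply]
    split_ifs
    · have := continuous_vhat (ψ := ψ) (R := R) 1 s
      fun_prop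
    · simp only [mul_zero, smul_zero]
      fun_prop
  have hFn : ∀ s v, ‖F s v‖ ≤ ν s := fun s v => by
    refine norm_smul_le_of_norm_le_one (hν.1 s) ?_
    rw [norm_mul, hEn, one_mul]
    exact norm_monomialRep_apply_le ψ R v s _ _
  have hfin : IsFiniteMeasure (volume.restrict (cube m)) :=
    ⟨by rw [Measure.restrict_apply_univ]; exact volume_cube_lt_top⟩
  have hFi : ∀ s, Integrable (F s) (volume.restrict (cube m)) := fun s =>
    Integrable.of_bound (hFc s).aestronglyMeasurable (ν s) (Eventually.of_forall (hFn s))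
  have hFs : Summable fun s => ∫ v in cube m, ‖F s v‖ := by
    refine Summable.of_nonneg_of_le (fun s => integral_nonneg fun v => norm_nonneg _) (fun s => ?_)
      (hν.2.summable.mul_left ((volume.restrict (cube m)).real Set.univ))
    refine (integral_mono (hFi s).norm (integrable_const (ν s)) (hFn s)).trans (le_of_eq ?_)
    rw [integral_const, smul_eq_mul]
  have hFint : ∀ s, ∫ v in cube m, F s v =
      if s = γ then (((2 * Real.pi) ^ m * ν γ : ℝ) : ℂ) else 0 := by
    intro s
    simp only [hF]
    rw [integral_smul]
    by_cases h1 : R.rep s = R.rep γ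
    · have h2 : ∀ v, E v * monomialRep ψ R v s ⟨1, R.one_mem⟩ (R.repΔ γ)
          = Complex.exp (Complex.I * ((∑ i, v i * ((Phi ψ R s - Phi ψ R γ) i : ℝ) : ℝ) : ℂ)) := by
        intro v
        simp only [monomialRep, Matrix.of_apply, if_pos ((hact s).2 h1), hE, vhat, hcoc, dotProduct]
        rw [← Complex.exp_add, ← mul_neg, ← mul_add, ← Complex.ofReal_neg, ← Complex.ofReal_add,
          neg_add_eq_sub, ← Finset.sum_sub_distrib]
        simp only [Pi.sub_apply, Int.cast_sub, mul_sub]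
      simp_rw [h2]
      rw [cube, integral_cube_cexp_int]
      by_cases h3 : s = γ
      · subst h3
        simp [mul_comm]
      · rw [if_neg h3, if_neg, smul_zero]
        exact fun h => h3 (eq_of_rep_eq_of_Phi_eq h1 (sub_eq_zero.1 h))
    · have h2 : s ≠ γ := fun h => h1 (by rw [h])
      simp only [monomialRep, Matrix.of_apply, if_neg (fun h => h1 ((hact s).1 h)), mul_zero,
        integral_zero, smul_zero, if_neg h2]
  rw [integral_congr_ae (Eventually.of_forall hrw),
    ← integral_tsum_of_summable_integral_norm hFi hFs]
  simp_rw [hFint]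
  rw [tsum_ite_eq]

end Inversion

section LocalLimit

open Topology

variable {Γ : Type*} [Group Γ] {Λ : Subgroup Γ} {m : ℕ}
variable (ψ : Λ ≃* Multiplicative (Fin m → ℤ)) (R : RepSystem Λ) (μ : Γ → ℝ)

/-- The recentred, rescaled and truncated powers of the Fourier operator. -/
noncomputable def scaledFourier (x y : R.Δ) (n : ℕ) (t : Fin m → ℝ) : ℂ :=
  Complex.exp (-(Complex.I * ((√n)⁻¹ * (t ⬝ᵥ drift ψ R μ) : ℝ))) ^ n
    * (cube m).indicator (fun v => (fourierOp ψ R μ v ^ n) x y) ((√n)⁻¹ • t)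

variable {ψ R μ}

lemma norm_cexp_neg_I_mul (r : ℝ) : ‖Complex.exp (-(Complex.I * (r : ℝ)))‖ = 1 := by
  have := norm_cexp_I_mul (-r)
  rwa [Complex.ofReal_neg, mul_neg] at this

lemma exists_norm_scaledFourier_le (hm : 1 ≤ m) (hμ : IsProb μ) (hnd : Nondeg μ)
    (hap : Aperiodic μ) : ∃ C κ : ℝ, 0 < κ ∧ ∀ n : ℕ, 1 ≤ n → ∀ (x y : R.Δ) (t : Fin m → ℝ),
      ‖scaledFourier ψ R μ x y n t‖ ≤ C * Real.exp (-κ * ∑ i, t i ^ 2) := by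
  obtain ⟨C, κ, hκ, hC⟩ := exists_norm_fourierOp_pow_le (ψ := ψ) (R := R) hm hμ hnd hap
  refine ⟨|C|, κ, hκ, fun n hn x y t => ?_⟩
  have hn0 : (0 : ℝ) < n := by exact_mod_cast hn
  rw [scaledFourier, norm_mul, norm_pow, norm_cexp_neg_I_mul, one_pow, one_mul]
  by_cases h : (√(n : ℝ))⁻¹ • t ∈ cube m
  · rw [Set.indicator_of_mem h]
    have h1 : ∀ i, |((√(n : ℝ))⁻¹ • t) i| ≤ Real.pi := fun i => by
      have := h i (Set.mem_univ i)
      exact abs_le.2 ⟨this.1.le, this.2⟩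
    refine (hC n _ h1 x y).trans ?_
    have h2 : (n : ℝ) * ∑ i, ((√(n : ℝ))⁻¹ • t) i ^ 2 = ∑ i, t i ^ 2 := by
      simp only [Pi.smul_apply, smul_eq_mul, mul_pow, ← Finset.mul_sum, inv_pow,
        Real.sq_sqrt hn0.le]
      rw [mul_inv_cancel_left₀ hn0.ne']
    rw [h2]
    exact mul_le_mul_of_nonneg_right (le_abs_self C) (Real.exp_pos _).le
  · rw [Set.indicator_of_notMem h, norm_zero]
    positivity

lemma tendsto_scaledFourier (hμ : IsProb μ) (hnd : Nondeg μ) (hap : Aperiodic μ)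
    (hmom : FinSecondMoment μ) {g : Fin m → R.Δ → ℝ} (hg : IsCorrector ψ R μ g) (x y : R.Δ)
    (t : Fin m → ℝ) : Tendsto (fun n => scaledFourier ψ R μ x y n t) atTop
      (𝓝 (((Fintype.card R.Δ : ℝ)⁻¹ * Real.exp (-(t ⬝ᵥ covMat ψ R μ g *ᵥ t / 2)) : ℝ) : ℂ)) := by
  refine (tendsto_fourierOp_pow hμ hnd hap hmom hg t x y).congr' ?_
  have hz : Tendsto (fun n : ℕ => (√(n : ℝ))⁻¹ • t) atTop (𝓝 0) := by
    simpa using (tendsto_inv_atTop_zero.comp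
      (Real.tendsto_sqrt_atTop.comp tendsto_natCast_atTop_atTop)).smul_const t
  filter_upwards [hz.eventually cube_mem_nhds_zero] with n hn
  rw [scaledFourier, Set.indicator_of_mem hn]

lemma measurable_scaledFourier (hμ : IsProb μ) (x y : R.Δ) (n : ℕ) :
    Measurable (scaledFourier ψ R μ x y n) := by
  have h1 : Continuous fun v => (fourierOp ψ R μ v ^ n) x y :=
    ((continuous_fourierOp hμ).pow n).matrix_elem x y
  have h2 : Measurable ((cube m).indicator fun v => (fourierOp ψ R μ v ^ n) x y) :=
    h1.measurable.indicator measurableSet_cube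
  have h3 : Continuous fun t : Fin m → ℝ =>
      Complex.exp (-(Complex.I * ((√n)⁻¹ * (t ⬝ᵥ drift ψ R μ) : ℝ))) ^ n := by
    simp only [dotProduct]
    fun_prop
  exact h3.measurable.mul (h2.comp (measurable_const_smul _))

lemma integrable_exp_neg_sum_sq {κ : ℝ} (hκ : 0 < κ) :
    Integrable fun t : Fin m → ℝ => Real.exp (-κ * ∑ i, t i ^ 2) := by
  have h := Integrable.fintype_prod (f := fun (_ : Fin m) (t : ℝ) => Real.exp (-κ * t ^ 2))
    (μ := fun _ => volume) fun _ => integrable_exp_neg_mul_sq hκ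
  refine h.congr (Eventually.of_forall fun t => ?_)
  simp only [Finset.mul_sum, Real.exp_sum]

lemma integrable_scaledFourier (hm : 1 ≤ m) (hμ : IsProb μ) (hnd : Nondeg μ)
    (hap : Aperiodic μ) (x y : R.Δ) {n : ℕ} (hn : 1 ≤ n) :
    Integrable (scaledFourier ψ R μ x y n) := by
  obtain ⟨C, κ, hκ, hC⟩ := exists_norm_scaledFourier_le (ψ := ψ) (R := R) hm hμ hnd hap
  exact ((integrable_exp_neg_sum_sq hκ).const_mul C).mono'
    (measurable_scaledFourier hμ x y n).aestronglyMeasurable (Eventually.of_forall (hC n hn x y))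

/-- The limiting Gaussian is integrable, and the rescaled Fourier operators converge to it in
`L¹`. -/
lemma tendsto_integral_norm_scaledFourier_sub (hm : 1 ≤ m) (hμ : IsProb μ) (hnd : Nondeg μ)
    (hap : Aperiodic μ) (hmom : FinSecondMoment μ) {g : Fin m → R.Δ → ℝ}
    (hg : IsCorrector ψ R μ g) (x y : R.Δ) :
    (Integrable fun t : Fin m → ℝ => (((Fintype.card R.Δ : ℝ)⁻¹ *
      Real.exp (-(t ⬝ᵥ covMat ψ R μ g *ᵥ t / 2)) : ℝ) : ℂ)) ∧
    Tendsto (fun n => ∫ t, ‖scaledFourier ψ R μ x y n t - (((Fintype.card R.Δ : ℝ)⁻¹ *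
      Real.exp (-(t ⬝ᵥ covMat ψ R μ g *ᵥ t / 2)) : ℝ) : ℂ)‖) atTop (𝓝 0) := by
  obtain ⟨C, κ, hκ, hC⟩ := exists_norm_scaledFourier_le (ψ := ψ) (R := R) hm hμ hnd hap
  set L : (Fin m → ℝ) → ℂ := fun t => (((Fintype.card R.Δ : ℝ)⁻¹ *
      Real.exp (-(t ⬝ᵥ covMat ψ R μ g *ᵥ t / 2)) : ℝ) : ℂ) with hL
  have hlim : ∀ t, Tendsto (fun n => scaledFourier ψ R μ x y n t) atTop (𝓝 (L t)) :=
    tendsto_scaledFourier hμ hnd hap hmom hg x y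
  have hLn : ∀ t, ‖L t‖ ≤ C * Real.exp (-κ * ∑ i, t i ^ 2) := fun t =>
    le_of_tendsto (hlim t).norm ((eventually_ge_atTop 1).mono fun n hn => hC n hn x y t)
  have hLc : Continuous L := by
    simp only [hL, dotProduct, mulVec]
    fun_prop
  have h_dom := (integrable_exp_neg_sum_sq (m := m) hκ).const_mul C
  refine ⟨h_dom.mono' hLc.aestronglyMeasurable (Eventually.of_forall hLn), ?_⟩
  have h := tendsto_integral_filter_of_dominated_convergence (l := atTop) (μ := volume)
    (F := fun n t => ‖scaledFourier ψ R μ x y n t - L t‖) (f := fun _ => 0)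
    (fun t => C * Real.exp (-κ * ∑ i, t i ^ 2) + C * Real.exp (-κ * ∑ i, t i ^ 2))
    (Eventually.of_forall fun n =>
      ((measurable_scaledFourier hμ x y n).sub hLc.measurable).norm.aestronglyMeasurable)
    ((eventually_ge_atTop 1).mono fun n hn => Eventually.of_forall fun t => ?_)
    (h_dom.add h_dom) (Eventually.of_forall fun t => ?_)
  · rwa [integral_zero] at h
  · rw [norm_norm]
    exact (norm_sub_le _ _).trans (add_le_add (hC n hn x y t) (hLn t))
  · simpa using ((hlim t).sub_const (L t)).norm

lemma integral_comp_inv_sqrt_smul {n : ℕ} (F : (Fin m → ℝ) → ℂ) :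
    ∫ t, F ((√(n : ℝ))⁻¹ • t) = (((n : ℝ) ^ ((m : ℝ) / 2) : ℝ) : ℂ) * ∫ v, F v := by
  rw [Measure.integral_comp_smul, Module.finrank_fin_fun, inv_pow, inv_inv,
    abs_of_nonneg (by positivity), Complex.real_smul]
  congr 2
  rw [Real.sqrt_eq_rpow, ← Real.rpow_natCast, ← Real.rpow_mul n.cast_nonneg]
  congr 1
  ring

lemma rpow_mul_abs_convPow_sub_le [Countable Γ] (hm : 1 ≤ m) (hμ : IsProb μ)
    (hnd : Nondeg μ) (hap : Aperiodic μ) (hmom : FinSecondMoment μ) {g : Fin m → R.Δ → ℝ}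
    (hg : IsCorrector ψ R μ g) {n : ℕ} (hn : 1 ≤ n) (γ : Γ) :
    (2 * Real.pi) ^ m * ((n : ℝ) ^ ((m : ℝ) / 2) *
      |convPow μ n γ - (Fintype.card R.Δ : ℝ)⁻¹ * gauss ((n : ℝ) • covMat ψ R μ g)
        (fun i => (Phi ψ R γ i : ℝ) - n * drift ψ R μ i)|)
      ≤ ∫ t, ‖scaledFourier ψ R μ ⟨1, R.one_mem⟩ (R.repΔ γ) n t - (((Fintype.card R.Δ : ℝ)⁻¹ *
          Real.exp (-(t ⬝ᵥ covMat ψ R μ g *ᵥ t / 2)) : ℝ) : ℂ)‖ := by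
  have hn0 : (0 : ℝ) < n := by exact_mod_cast hn
  set S := covMat ψ R μ g with hS
  set w : Fin m → ℝ := fun i => (Phi ψ R γ i : ℝ) - n * drift ψ R μ i with hw
  set x : R.Δ := ⟨1, R.one_mem⟩ with hx
  set y : R.Δ := R.repΔ γ with hy
  set L : (Fin m → ℝ) → ℂ := fun t => (((Fintype.card R.Δ : ℝ)⁻¹ *
      Real.exp (-(t ⬝ᵥ S *ᵥ t / 2)) : ℝ) : ℂ) with hL
  set r : ℝ := (n : ℝ) ^ ((m : ℝ) / 2) with hr
  set h : ℝ := (√(n : ℝ))⁻¹ with hh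
  have hh2 : (n : ℝ) * h ^ 2 = 1 := by
    rw [hh, inv_pow, Real.sq_sqrt hn0.le, mul_inv_cancel₀ hn0.ne']
  set E : (Fin m → ℝ) → ℂ := fun t => Complex.exp (-(Complex.I * ((h • t ⬝ᵥ w : ℝ) : ℂ))) with hE
  have hEn : ∀ t, ‖E t‖ = 1 := fun t => norm_cexp_neg_I_mul _
  have hEc : Continuous E := by
    simp only [hE, dotProduct, Pi.smul_apply]
    fun_prop
  have hLi := (tendsto_integral_norm_scaledFourier_sub hm hμ hnd hap hmom hg x y).1
  have hSi := integrable_scaledFourier (ψ := ψ) hm hμ hnd hap x y hn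
  have h1 : ∫ t, E t * scaledFourier ψ R μ x y n t
      = (((2 * Real.pi) ^ m * r * convPow μ n γ : ℝ) : ℂ) := by
    set F : (Fin m → ℝ) → ℂ := (cube m).indicator fun v =>
      Complex.exp (-(Complex.I * ((v ⬝ᵥ fun i => (Phi ψ R γ i : ℝ) : ℝ) : ℂ)))
        * fourierOp ψ R (convPow μ n) v x y with hF
    have h2 : ∀ t, E t * scaledFourier ψ R μ x y n t = F (h • t) := by
      intro t
      simp only [scaledFourier, hF, ← hh]
      by_cases hmem : h • t ∈ cube m
      · rw [Set.indicator_of_mem hmem, Set.indicator_of_mem hmem, fourierOp_convPow hμ, ← mul_assoc]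
        congr 1
        rw [← Complex.exp_nat_mul, ← Complex.exp_add]
        congr 1
        have h3 : (h • t ⬝ᵥ fun i => (Phi ψ R γ i : ℝ))
            = h • t ⬝ᵥ w + n * (h * (t ⬝ᵥ drift ψ R μ)) := by
          simp only [dotProduct, hw, Finset.mul_sum, ← Finset.sum_add_distrib, Pi.smul_apply,
            smul_eq_mul]
          exact Finset.sum_congr rfl fun i _ => by ring
        rw [h3]
        push_cast
        ring
      · rw [Set.indicator_of_notMem hmem, Set.indicator_of_notMem hmem, mul_zero, mul_zero]
    simp_rw [h2]
    rw [integral_comp_inv_sqrt_smul, hF, integral_indicator measurableSet_cube,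
      integral_cube_fourierOp (isProb_convPow hμ n)]
    push_cast
    ring
  have h4 : ∫ t, E t * L t = (((2 * Real.pi) ^ m * r * ((Fintype.card R.Δ : ℝ)⁻¹ *
      gauss ((n : ℝ) • S) w) : ℝ) : ℂ) := by
    set F : (Fin m → ℝ) → ℂ := fun v => Complex.exp (-(Complex.I * ((v ⬝ᵥ w : ℝ) : ℂ)))
        * (Real.exp (-(v ⬝ᵥ ((n : ℝ) • S) *ᵥ v) / 2) : ℂ) with hF
    have h5 : ∀ t, E t * L t = (((Fintype.card R.Δ : ℝ)⁻¹ : ℝ) : ℂ) * F (h • t) := by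
      intro t
      have h6 : h • t ⬝ᵥ ((n : ℝ) • S) *ᵥ (h • t) = t ⬝ᵥ S *ᵥ t := by
        rw [smul_mulVec, mulVec_smul, smul_dotProduct, dotProduct_smul, dotProduct_smul]
        simp only [smul_eq_mul]
        linear_combination (t ⬝ᵥ S *ᵥ t) * hh2
      simp only [hE, hL, hF, h6, neg_div]
      push_cast
      ring
    simp_rw [h5]
    rw [integral_const_mul, integral_comp_inv_sqrt_smul, hF, integral_cexp_neg_quadratic
      ((covMat_posDef hμ hnd hap hmom g).smul hn0)]
    push_cast
    ring
  have h7 : (((2 * Real.pi) ^ m * (r * (convPow μ n γ - (Fintype.card R.Δ : ℝ)⁻¹ *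
      gauss ((n : ℝ) • S) w)) : ℝ) : ℂ) = ∫ t, E t * (scaledFourier ψ R μ x y n t - L t) := by
    simp_rw [mul_sub]
    rw [integral_sub, h1, h4]
    · push_cast
      ring
    · exact hSi.bdd_mul hEc.aestronglyMeasurable (Eventually.of_forall fun t => (hEn t).le)
    · exact hLi.bdd_mul hEc.aestronglyMeasurable (Eventually.of_forall fun t => (hEn t).le)
  have h8 := congrArg norm h7
  rw [Complex.norm_real, Real.norm_eq_abs, abs_mul, abs_mul, abs_of_nonneg (a := r) (by positivity),
    abs_of_nonneg (a := (2 * Real.pi) ^ m) (by positivity)] at h8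
  rw [h8]
  refine (norm_integral_le_integral_norm _).trans (le_of_eq ?_)
  simp_rw [norm_mul, hEn, one_mul]
  rfl

end LocalLimit

/-- Local CLT (aperiodic case): there is a symmetric positive-definite
covariance matrix `Σ`, given on harmonic parts by the covariance pairing, such that
`sup_γ n^{m/2}·|μ_n(γ) − (1/#F)·ξ_{nΣ}(Φ(γ) − nζ)| → 0`. -/
theorem local_clt_aperiodic
    {Γ : Type*} [Group Γ] [Countable Γ] {Λ : Subgroup Γ} (hN : Λ.Normal)
    (hI : Λ.index ≠ 0) {m : ℕ} (hm : 1 ≤ m) (ψ : Λ ≃* Multiplicative (Fin m → ℤ))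
    (R : RepSystem Λ) (μ : Γ → ℝ) (hμ : IsProb μ) (hnd : Nondeg μ) (hap : Aperiodic μ)
    (hmom : FinSecondMoment μ) :
    ∃ Sig : Matrix (Fin m) (Fin m) ℝ, Sig.IsSymm ∧ Sig.PosDef ∧
      (∀ (v₁ v₂ : Fin m → ℝ) (u₁ u₂ : Γ → Γ → ℝ) (f₁ f₂ : Γ → ℝ),
        IsHarmDecomp R μ (vhat ψ R v₁) u₁ f₁ → IsHarmDecomp R μ (vhat ψ R v₂) u₂ f₂ →
        v₁ ⬝ᵥ Sig.mulVec v₂ = cov R μ u₁ u₂) ∧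
      (∀ ε : ℝ, 0 < ε → ∃ N : ℕ, ∀ n : ℕ, N ≤ n → ∀ γ : Γ,
        (n : ℝ) ^ ((m : ℝ) / 2) *
          |convPow μ n γ - (Λ.index : ℝ)⁻¹ *
            gauss ((n : ℝ) • Sig) (fun i => (Phi ψ R γ i : ℝ) - n * drift ψ R μ i)| ≤ ε) := by
  obtain ⟨g, hg⟩ := exists_isCorrector (ψ := ψ) (R := R) hN hμ hnd hap hmom
  refine ⟨covMat ψ R μ g, covMat_isSymm g, covMat_posDef hμ hnd hap hmom g,
    fun v₁ v₂ u₁ u₂ f₁ f₂ hu₁ hu₂ => cov_eq_dotProduct_covMat hN hμ hnd hap hmom hg hu₁ hu₂,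
    fun ε hε => ?_⟩
  have hpi : (0 : ℝ) < (2 * Real.pi) ^ m := by positivity
  have hev := eventually_all.2 fun y =>
    (tendsto_integral_norm_scaledFourier_sub hm hμ hnd hap hmom hg
      ⟨1, R.one_mem⟩ y).2.eventually_lt_const (mul_pos hpi hε)
  obtain ⟨N, hN'⟩ := eventually_atTop.1 (hev.and (eventually_ge_atTop 1))
  refine ⟨N, fun n hn γ => ?_⟩
  obtain ⟨hlt, hn1⟩ := hN' n hn
  rw [← R.card_eq_index hN]
  exact le_of_mul_le_mul_left
    ((rpow_mul_abs_convPow_sub_le hm hμ hnd hap hmom hg hn1 γ).trans (hlt (R.repΔ γ)).le) hpi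

end NSVA
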